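/- arXiv:0706.1418 — 8 statements merged into one kernel-verified Lean document; each statement's English description precedes it below -/
import Mathlib

section
/- Let (S, Φ) be a complete Menger space under Min whose probabilistic metric takes values in D⁺, and let f : S → S be a B-contraction, i.e., there exists h ∈ (0,1) such that F_{fp,fq}(ht) ≥ F_{p,q}(t) for all p, q ∈ S and t > 0. Then f has a unique fixed point r ∈ S, and for every p ∈ S the sequence of iterates f^n p converges to r (that is, F_{f^n p, r}(t) → 1 as n → ∞ for every t > 0). -/
open Filter

/-- A distance distribution function: nondecreasing, left-continuous on `(0,∞)`,
with values in `[0,1]` and vanishing on `(-∞,0]`. -/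
def IsDDF (F : ℝ → ℝ) : Prop :=
  Monotone F ∧ (∀ t : ℝ, 0 < t → ContinuousWithinAt F (Set.Iio t) t) ∧
    (∀ t : ℝ, 0 ≤ F t ∧ F t ≤ 1) ∧ (∀ t : ℝ, t ≤ 0 → F t = 0)

/-- Membership in `D⁺`: a d.d.f. tending to `1` at `+∞`. -/
def MemDplus (F : ℝ → ℝ) : Prop :=
  IsDDF F ∧ Tendsto F atTop (nhds 1)

/-!
Under `Min`, splitting `t = (1 - h) * t + h * t` shows by induction on `k` that
`Φ p (f p) ((1 - h) * t) ≤ Φ p (f^[k] p) t`: no loss accumulates, since both arguments of the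
minimum are bounded below by the same number. As `Φ p q (t / h ^ n) ≤ Φ (f^[n] p) (f^[n] q) t`, the
orbit of `p` is therefore Cauchy as soon as `Φ p (f p)` tends to `1` at infinity. Its limit is fixed
because `f` is continuous, and it attracts every `q` such that `Φ p q` tends to `1` at infinity.
-/

open scoped Topology

/-- The axioms of a Menger space under `Min`, for the probabilistic metric `Φ` on `S`. -/
structure IsMengerSpace {S : Type*} (Φ : S → S → ℝ → ℝ) : Prop where
  isDDF (p q : S) : IsDDF (Φ p q)
  eq_one_iff (p q : S) : (∀ t : ℝ, 0 < t → Φ p q t = 1) ↔ p = q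
  symm (p q : S) : Φ p q = Φ q p
  triangle (p q r : S) (s t : ℝ) : 0 < s → 0 < t →
    min (Φ p q s) (Φ q r t) ≤ Φ p r (s + t)

/-- Convergence of a sequence with respect to the probabilistic metric `Φ`. -/
def MengerConverges {S : Type*} (Φ : S → S → ℝ → ℝ) (x : ℕ → S) (p : S) : Prop :=
  ∀ t : ℝ, 0 < t → Tendsto (fun n => Φ (x n) p t) atTop (𝓝 1)

/-- Cauchy sequences with respect to the probabilistic metric `Φ`. -/
def MengerCauchy {S : Type*} (Φ : S → S → ℝ → ℝ) (x : ℕ → S) : Prop :=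
  ∀ t : ℝ, 0 < t → ∀ ε : ℝ, 0 < ε → ∃ N : ℕ, ∀ n m : ℕ, N ≤ n → N ≤ m → 1 - ε < Φ (x n) (x m) t

/-- Sequential completeness with respect to the probabilistic metric `Φ`. -/
def MengerComplete {S : Type*} (Φ : S → S → ℝ → ℝ) : Prop :=
  ∀ x : ℕ → S, MengerCauchy Φ x → ∃ p : S, MengerConverges Φ x p

/-- `f` is a B-contraction for `Φ` with constant `h`, the condition `h ∈ (0, 1)` being kept
separate. -/
def IsBContraction {S : Type*} (Φ : S → S → ℝ → ℝ) (h : ℝ) (f : S → S) : Prop :=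
  ∀ p q : S, ∀ t : ℝ, 0 < t → Φ p q t ≤ Φ (f p) (f q) (h * t)

theorem tendsto_div_pow_atTop {h c : ℝ} (h₀ : 0 < h) (h₁ : h < 1) (hc : 0 < c) :
    Tendsto (fun n : ℕ => c / h ^ n) atTop atTop := by
  simpa only [div_eq_mul_inv, inv_pow] using
    (tendsto_pow_atTop_atTop_of_one_lt ((one_lt_inv₀ h₀).2 h₁)).const_mul_atTop hc

section

variable {S : Type*} {Φ : S → S → ℝ → ℝ} {h : ℝ} {f : S → S}

namespace IsMengerSpace

theorem le_one (hΦ : IsMengerSpace Φ) (p q : S) (t : ℝ) : Φ p q t ≤ 1 :=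
  ((hΦ.isDDF p q).2.2.1 t).2

theorem self_eq_one (hΦ : IsMengerSpace Φ) (p : S) {t : ℝ} (ht : 0 < t) : Φ p p t = 1 :=
  (hΦ.eq_one_iff p p).2 rfl t ht

theorem tendsto_one_of_le (hΦ : IsMengerSpace Φ) {α : Type*} {l : Filter α} {x y : α → S}
    {u g : α → ℝ} (hg : Tendsto g l (𝓝 1)) (hle : ∀ᶠ a in l, g a ≤ Φ (x a) (y a) (u a)) :
    Tendsto (fun a => Φ (x a) (y a) (u a)) l (𝓝 1) :=
  tendsto_of_tendsto_of_tendsto_of_le_of_le' hg tendsto_const_nhds hle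
    (.of_forall fun _ => hΦ.le_one _ _ _)

theorem min_half_le (hΦ : IsMengerSpace Φ) (p q r : S) {t : ℝ} (ht : 0 < t) :
    min (Φ p q (t / 2)) (Φ q r (t / 2)) ≤ Φ p r t := by
  simpa only [add_halves] using hΦ.triangle p q r (t / 2) (t / 2) (half_pos ht) (half_pos ht)

theorem converges_of_tendsto (hΦ : IsMengerSpace Φ) {x y : ℕ → S} {r : S}
    (hx : MengerConverges Φ x r)
    (hyx : ∀ t : ℝ, 0 < t → Tendsto (fun n => Φ (y n) (x n) t) atTop (𝓝 1)) :
    MengerConverges Φ y r := fun t ht =>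
  have hmin := (hyx (t / 2) (half_pos ht)).min (hx (t / 2) (half_pos ht))
  hΦ.tendsto_one_of_le (min_self (1 : ℝ) ▸ hmin) (.of_forall fun _ => hΦ.min_half_le _ _ _ ht)

theorem eq_of_converges_const (hΦ : IsMengerSpace Φ) {p r : S}
    (hpr : MengerConverges Φ (fun _ => p) r) : p = r :=
  (hΦ.eq_one_iff p r).1 fun t ht => tendsto_nhds_unique tendsto_const_nhds (hpr t ht)

theorem converges_unique (hΦ : IsMengerSpace Φ) {x : ℕ → S} {p r : S}
    (hp : MengerConverges Φ x p) (hr : MengerConverges Φ x r) : p = r :=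
  hΦ.eq_of_converges_const <| hΦ.converges_of_tendsto hr fun t ht => by
    simpa only [hΦ.symm p] using hp t ht

theorem le_of_converges (hΦ : IsMengerSpace Φ) {x : ℕ → S} {p r : S} {s t c : ℝ}
    (hx : MengerConverges Φ x r) (hs : 0 < s) (ht : 0 < t) (hc : ∀ n, c ≤ Φ p (x n) s) :
    c ≤ Φ p r (s + t) := by
  have hc_one : c ≤ 1 := (hc 0).trans (hΦ.le_one _ _ _)
  have hlim : Tendsto (fun n => min c (Φ (x n) r t)) atTop (𝓝 c) := by
    simpa only [min_eq_left hc_one] using (tendsto_const_nhds (x := c)).min (hx t ht)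
  exact le_of_tendsto' hlim fun n =>
    (min_le_min_right _ (hc n)).trans (hΦ.triangle p (x n) r s t hs ht)

end IsMengerSpace

namespace IsBContraction

theorem le_apply_div (hf : IsBContraction Φ h f) (h₀ : 0 < h) (p q : S) {t : ℝ} (ht : 0 < t) :
    Φ p q (t / h) ≤ Φ (f p) (f q) t := by
  simpa only [mul_div_cancel₀ t h₀.ne'] using hf p q (t / h) (div_pos ht h₀)

theorem iterate (hf : IsBContraction Φ h f) (h₀ : 0 < h) (n : ℕ) :
    IsBContraction Φ (h ^ n) f^[n] := by
  induction n with
  | zero => intro p q t _; simp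
  | succ n ih =>
    intro p q t ht
    simpa only [Function.iterate_succ_apply', pow_succ', mul_assoc] using
      (ih p q t ht).trans (hf _ _ _ (mul_pos (pow_pos h₀ n) ht))

theorem tendsto_iterate (hf : IsBContraction Φ h f) (hΦ : IsMengerSpace Φ) (h₀ : 0 < h)
    (h₁ : h < 1) {p q : S} (hpq : Tendsto (Φ p q) atTop (𝓝 1)) {t : ℝ} (ht : 0 < t) :
    Tendsto (fun n => Φ (f^[n] p) (f^[n] q) t) atTop (𝓝 1) :=
  hΦ.tendsto_one_of_le (hpq.comp (tendsto_div_pow_atTop h₀ h₁ ht)) <|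
    .of_forall fun n => (hf.iterate h₀ n).le_apply_div (pow_pos h₀ n) p q ht

theorem converges_apply (hf : IsBContraction Φ h f) (hΦ : IsMengerSpace Φ) (h₀ : 0 < h)
    {x : ℕ → S} {r : S} (hx : MengerConverges Φ x r) :
    MengerConverges Φ (fun n => f (x n)) (f r) := fun t ht =>
  hΦ.tendsto_one_of_le (hx (t / h) (div_pos ht h₀)) <|
    .of_forall fun n => hf.le_apply_div h₀ (x n) r ht

theorem le_self_iterate (hf : IsBContraction Φ h f) (hΦ : IsMengerSpace Φ) (h₀ : 0 < h)
    (h₁ : h < 1) (p : S) (k : ℕ) {t : ℝ} (ht : 0 < t) :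
    Φ p (f p) ((1 - h) * t) ≤ Φ p (f^[k] p) t := by
  induction k with
  | zero => exact (hΦ.le_one _ _ _).trans_eq (hΦ.self_eq_one p ht).symm
  | succ k ih =>
    have hstep : Φ p (f p) ((1 - h) * t) ≤ Φ (f p) (f^[k + 1] p) (h * t) := by
      rw [Function.iterate_succ_apply']
      exact ih.trans (hf p (f^[k] p) t ht)
    calc
      Φ p (f p) ((1 - h) * t)
          ≤ min (Φ p (f p) ((1 - h) * t)) (Φ (f p) (f^[k + 1] p) (h * t)) := le_min le_rfl hstep
      _ ≤ Φ p (f^[k + 1] p) ((1 - h) * t + h * t) :=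
        hΦ.triangle _ _ _ _ _ (mul_pos (sub_pos.2 h₁) ht) (mul_pos h₀ ht)
      _ = Φ p (f^[k + 1] p) t := by ring_nf

theorem le_iterate_iterate_add (hf : IsBContraction Φ h f) (hΦ : IsMengerSpace Φ) (h₀ : 0 < h)
    (h₁ : h < 1) (p : S) (n k : ℕ) {t : ℝ} (ht : 0 < t) :
    Φ p (f p) ((1 - h) * t / h ^ n) ≤ Φ (f^[n] p) (f^[n + k] p) t := by
  have hn : 0 < h ^ n := pow_pos h₀ n
  rw [mul_div_assoc, Function.iterate_add_apply]
  exact (hf.le_self_iterate hΦ h₀ h₁ p k (div_pos ht hn)).trans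
    ((hf.iterate h₀ n).le_apply_div hn _ _ ht)

theorem cauchy_iterate (hf : IsBContraction Φ h f) (hΦ : IsMengerSpace Φ) (h₀ : 0 < h)
    (h₁ : h < 1) {p : S} (hp : Tendsto (Φ p (f p)) atTop (𝓝 1)) :
    MengerCauchy Φ fun n => f^[n] p := by
  intro t ht ε hε
  have hlim := hp.comp (tendsto_div_pow_atTop h₀ h₁ (mul_pos (sub_pos.2 h₁) ht))
  obtain ⟨N, hN⟩ := eventually_atTop.1 (hlim.eventually_const_lt (sub_lt_self 1 hε))
  refine ⟨N, fun n m hn hm => ?_⟩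
  wlog hnm : n ≤ m generalizing n m
  · rw [hΦ.symm]
    exact this m n hm hn (le_of_not_ge hnm)
  · obtain ⟨k, rfl⟩ := Nat.exists_eq_add_of_le hnm
    exact (hN n hn).trans_le (hf.le_iterate_iterate_add hΦ h₀ h₁ p n k ht)

theorem apply_eq_of_converges_iterate (hf : IsBContraction Φ h f) (hΦ : IsMengerSpace Φ)
    (h₀ : 0 < h) {p r : S} (hr : MengerConverges Φ (fun n => f^[n] p) r) : f r = r :=
  hΦ.converges_unique (hf.converges_apply hΦ h₀ hr) fun t ht => by
    simpa only [Function.iterate_succ_apply'] using (tendsto_add_atTop_iff_nat 1).2 (hr t ht)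

theorem tendsto_of_converges_iterate (hf : IsBContraction Φ h f) (hΦ : IsMengerSpace Φ)
    (h₀ : 0 < h) (h₁ : h < 1) {p r : S} (hp : Tendsto (Φ p (f p)) atTop (𝓝 1))
    (hr : MengerConverges Φ (fun n => f^[n] p) r) : Tendsto (Φ p r) atTop (𝓝 1) := by
  have hscale : Tendsto (fun t : ℝ => (1 - h) * (t / 2)) atTop atTop :=
    (tendsto_id.atTop_div_const two_pos).const_mul_atTop (sub_pos.2 h₁)
  refine hΦ.tendsto_one_of_le (hp.comp hscale) ((eventually_gt_atTop 0).mono fun t ht => ?_)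
  simpa only [add_halves, Function.comp_apply] using
    hΦ.le_of_converges hr (half_pos ht) (half_pos ht) fun n =>
      hf.le_self_iterate hΦ h₀ h₁ p n (half_pos ht)

end IsBContraction

theorem b_contraction_fixed_point_general (hΦ : IsMengerSpace Φ) (hcomplete : MengerComplete Φ)
    (hf : IsBContraction Φ h f) (hh : h ∈ Set.Ioo (0 : ℝ) 1) {p : S}
    (hp : Tendsto (Φ p (f p)) atTop (𝓝 1)) :
    ∃ r : S, f r = r ∧ Tendsto (Φ p r) atTop (𝓝 1) ∧
      (∀ r' : S, f r' = r' → Tendsto (Φ p r') atTop (𝓝 1) → r' = r) ∧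
      ∀ q : S, Tendsto (Φ p q) atTop (𝓝 1) → MengerConverges Φ (fun n => f^[n] q) r := by
  obtain ⟨h₀, h₁⟩ := hh
  obtain ⟨r, hr⟩ := hcomplete _ (hf.cauchy_iterate hΦ h₀ h₁ hp)
  have hattract (q : S) (hq : Tendsto (Φ p q) atTop (𝓝 1)) :
      MengerConverges Φ (fun n => f^[n] q) r :=
    hΦ.converges_of_tendsto hr fun _ => hf.tendsto_iterate hΦ h₀ h₁ (hΦ.symm p q ▸ hq)
  refine ⟨r, hf.apply_eq_of_converges_iterate hΦ h₀ hr,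
    hf.tendsto_of_converges_iterate hΦ h₀ h₁ hp hr, fun r' hr' hpr' => ?_, hattract⟩
  exact hΦ.eq_of_converges_const <| by
    simpa only [Function.iterate_fixed hr'] using hattract r' hpr'

end

/-- **Sehgal–Bharucha-Reid fixed point theorem.** In a complete Menger space under `Min`
with values in `D⁺`, every B-contraction has a unique fixed point `r`, and the iterates
`f^[n] p` converge to `r` for every `p`. -/
theorem b_contraction_fixed_point
    {S : Type*} [Nonempty S] (Φ : S → S → ℝ → ℝ)
    (hDplus : ∀ p q : S, MemDplus (Φ p q))
    (hPM1 : ∀ p q : S, (∀ t : ℝ, 0 < t → Φ p q t = 1) ↔ p = q)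
    (hPM2 : ∀ p q : S, Φ p q = Φ q p)
    (hPM3 : ∀ p q r : S, ∀ s t : ℝ, 0 < s → 0 < t →
      min (Φ p q s) (Φ q r t) ≤ Φ p r (s + t))
    (hComplete : ∀ x : ℕ → S,
      (∀ t : ℝ, 0 < t → ∀ ε : ℝ, 0 < ε → ∃ N : ℕ, ∀ n m : ℕ, N ≤ n → N ≤ m →
        1 - ε < Φ (x n) (x m) t) →
      ∃ p : S, ∀ t : ℝ, 0 < t → Tendsto (fun n => Φ (x n) p t) atTop (nhds 1))
    (f : S → S) (h : ℝ) (hh : h ∈ Set.Ioo (0 : ℝ) 1)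
    (hf : ∀ p q : S, ∀ t : ℝ, 0 < t → Φ p q t ≤ Φ (f p) (f q) (h * t)) :
    ∃ r : S, f r = r ∧ (∀ r' : S, f r' = r' → r' = r) ∧
      ∀ p : S, ∀ t : ℝ, 0 < t →
        Tendsto (fun n => Φ (f^[n] p) r t) atTop (nhds 1) := by
  obtain ⟨p⟩ := ‹Nonempty S›
  obtain ⟨r, hr, -, huniq, hattract⟩ := b_contraction_fixed_point_general
    ⟨fun p q => (hDplus p q).1, hPM1, hPM2, hPM3⟩ hComplete hf hh (hDplus p (f p)).2
  exact ⟨r, hr, fun r' hr' => huniq r' hr' (hDplus p r').2, fun q => hattract q (hDplus p q).2⟩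
end

section
/- Let (S, Φ) be a complete Menger space under Min whose probabilistic metric takes values in D⁺, let m ≥ 1 be an integer and k ∈ (0,1), and let f : S → S be a probabilistic (m,k)-B-contraction. Then f has a fixed point. -/
open Filter

/-!
For `ε > 0` the quantiles `d_ε p q = inf {t > 0 | Φ p q t > 1 - ε}` are pseudometrics, because the
triangle inequality under `Min` acts on each level separately. They turn `S` into a complete
Hausdorff uniform space on which, for all `p, q`, a single `f^i` with `1 ≤ i ≤ m` contracts every
`d_ε p q` by the factor `k ^ i`.

On such a space every orbit returns to a bounded set in each window of `m` consecutive times.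
Pigeonhole along a nonprincipal ultrafilter `u` on `ℕ` then gives points `y`, `p` and infinitely
many shifts `b` with `f^[n + b] y → p` along `u`. Applying suitable iterates `f^i` to these limits
expresses the limit of one sequence `f^[n + t] y` as `f^[t - b] p` for two different shifts `b`, so
the orbit of `p` meets a cycle. If `z` lies on this cycle, the iterates of `z` and `f z` come
arbitrarily close at some times; since only finitely many points are involved, `f^[r] z` and
`f^[r] (f z)` coincide for some `r`, and `f^[r] z` is a fixed point.
-/

section Uniform

open scoped Topology Uniformity

variable {α S : Type*} [UniformSpace S] {u : Filter α} [u.NeBot] {g h : α → S}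

theorem cauchy_map_of_tendsto_curry
    (H : Tendsto (fun a : α × α => (g a.1, h a.2)) (u.curry u) (𝓤 S)) : Cauchy (u.map g) := by
  refine cauchy_map_iff'.2 fun V hV => ?_
  obtain ⟨W, hW, W_symm, hWV⟩ := comp_symm_mem_uniformity_sets hV
  have hgh : ∀ᶠ n in u, ∀ᶠ n' in u, (g n, h n') ∈ W := eventually_curry_iff.1 (H hW)
  refine (hgh.prod_mk hgh).mono fun a ⟨h₁, h₂⟩ => ?_
  obtain ⟨n', h₁', h₂'⟩ := (h₁.and h₂).exists
  exact hWV ⟨h n', h₁', W_symm.symm _ _ h₂'⟩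

theorem tendsto_nhds_of_tendsto_curry {p : S} (hg : Tendsto g u (𝓝 p))
    (H : Tendsto (fun a : α × α => (g a.1, h a.2)) (u.curry u) (𝓤 S)) : Tendsto h u (𝓝 p) := by
  refine Uniform.tendsto_nhds_right.2 fun V hV => ?_
  obtain ⟨W, hW, hWV⟩ := comp_mem_uniformity_sets hV
  have hgh : ∀ᶠ n in u, ∀ᶠ n' in u, (g n, h n') ∈ W := eventually_curry_iff.1 (H hW)
  obtain ⟨n, hn, hpn⟩ := (hgh.and (Uniform.tendsto_nhds_right.1 hg hW)).exists
  exact hn.mono fun n' hn' => hWV ⟨g n, hpn, hn'⟩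

end Uniform

section Gauge

open scoped Topology Uniformity

variable {α ι S : Type*} {d : ι → PseudoMetric S ℝ}

/-- The uniform structure defined by a family of pseudometrics. -/
abbrev gaugeUniformSpace (d : ι → PseudoMetric S ℝ) : UniformSpace S :=
  ⨅ l, UniformSpace.ofDist (d l) (d l).refl (d l).symm (d l).triangle

/-- A family of pseudometrics is a gauge of a uniform space if it defines its uniform structure. -/
def IsGauge [UniformSpace S] (d : ι → PseudoMetric S ℝ) : Prop :=
  𝓤 S = ⨅ l, comap (fun x : S × S => d l x.1 x.2) (𝓝 0)

theorem isGauge_gaugeUniformSpace (d : ι → PseudoMetric S ℝ) :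
    @IsGauge _ _ (gaugeUniformSpace d) d := by
  change 𝓤[gaugeUniformSpace d] = _
  rw [iInf_uniformity]
  refine iInf_congr fun l => ?_
  let _ : PseudoMetricSpace S :=
    { dist := d l, dist_self := (d l).refl, dist_comm := (d l).symm,
      dist_triangle := (d l).triangle }
  exact Metric.uniformity_eq_comap_nhds_zero

namespace IsGauge

variable [UniformSpace S]

theorem tendsto_uniformity_iff (hd : IsGauge d) {F : Filter α} {g : α → S × S} :
    Tendsto g F (𝓤 S) ↔ ∀ l, Tendsto (fun a => d l (g a).1 (g a).2) F (𝓝 0) := by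
  rw [show 𝓤 S = _ from hd]
  simp only [tendsto_iInf, tendsto_comap_iff, Function.comp_def]

theorem tendsto_nhds_iff (hd : IsGauge d) {F : Filter α} {g : α → S} {p : S} :
    Tendsto g F (𝓝 p) ↔ ∀ l, Tendsto (fun a => d l (g a) p) F (𝓝 0) := by
  rw [Uniform.tendsto_nhds_left, hd.tendsto_uniformity_iff]

theorem inseparable_iff (hd : IsGauge d) {p q : S} :
    Inseparable p q ↔ ∀ l, d l p q = 0 := by
  rw [inseparable_iff_ker_uniformity, show 𝓤 S = _ from hd]
  simp only [ker_iInf, ker_comap, ker_nhds, Set.mem_iInter, Set.mem_preimage,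
    Set.mem_singleton_iff]

theorem isCountablyGenerated_uniformity [Countable ι] (hd : IsGauge d) :
    (𝓤 S).IsCountablyGenerated := by
  rw [show 𝓤 S = _ from hd]
  infer_instance

end IsGauge

end Gauge

theorem exists_mem_Ico_of_forall_exists_add {P : ℕ → Prop} {m : ℕ} (zero : P 0)
    (step : ∀ n, P n → ∃ i, 1 ≤ i ∧ i ≤ m ∧ P (i + n)) (N : ℕ) :
    ∃ n ∈ Set.Ico N (N + m), P n := by
  induction N with
  | zero =>
    obtain ⟨i, hi, him, -⟩ := step 0 zero
    exact ⟨0, ⟨le_rfl, by lia⟩, zero⟩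
  | succ N ih =>
    obtain ⟨n, ⟨hNn, hn⟩, hPn⟩ := ih
    rcases hNn.lt_or_eq with h | rfl
    · exact ⟨n, ⟨h, by lia⟩, hPn⟩
    · obtain ⟨i, hi, him, hP⟩ := step N hPn
      exact ⟨i + N, ⟨by lia, by lia⟩, hP⟩

theorem exists_isPeriodicPt_of_iterate_eq {S : Type*} {f : S → S} {p : S} {i j : ℕ} (hij : i ≠ j)
    (h : f^[i] p = f^[j] p) : ∃ z : S, ∃ L > 0, Function.IsPeriodicPt f L z := by
  wlog hlt : i < j generalizing i j
  · exact this hij.symm h.symm (by lia)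
  refine ⟨f^[i] p, j - i, Nat.sub_pos_of_lt hlt, ?_⟩
  rw [Function.IsPeriodicPt, Function.IsFixedPt, ← Function.iterate_add_apply,
    Nat.sub_add_cancel hlt.le, h]

/-- The `(m, k)`-contraction condition for a family of pseudometrics. The exponent `i` depends on
the two points but not on the pseudometric. -/
def IsIterateContraction {ι S : Type*} (d : ι → PseudoMetric S ℝ) (m : ℕ) (k : ℝ) (f : S → S) :
    Prop :=
  ∀ p q : S, ∃ i : ℕ, 1 ≤ i ∧ i ≤ m ∧ ∀ l, d l (f^[i] p) (f^[i] q) ≤ k ^ i * d l p q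

namespace IsIterateContraction

open scoped Topology Uniformity

variable {ι S : Type*} {d : ι → PseudoMetric S ℝ} {m : ℕ} {k : ℝ} {f : S → S}

theorem exists_iterate_le (hf : IsIterateContraction d m k f) (hk₀ : 0 ≤ k) (p q : S) (N : ℕ) :
    ∃ n ∈ Set.Ico N (N + m), ∀ l, d l (f^[n] p) (f^[n] q) ≤ k ^ n * d l p q := by
  refine exists_mem_Ico_of_forall_exists_add (fun l => by simp) (fun n hn => ?_) N
  obtain ⟨i, hi, him, hfi⟩ := hf (f^[n] p) (f^[n] q)
  refine ⟨i, hi, him, fun l => ?_⟩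
  rw [Function.iterate_add_apply, Function.iterate_add_apply]
  calc d l (f^[i] (f^[n] p)) (f^[i] (f^[n] q))
      ≤ k ^ i * d l (f^[n] p) (f^[n] q) := hfi l
    _ ≤ k ^ i * (k ^ n * d l p q) := by gcongr; exact hn l
    _ = k ^ (i + n) * d l p q := by ring

theorem exists_bounded_returns (hf : IsIterateContraction d m k f) (hk₀ : 0 ≤ k) (hk₁ : k < 1)
    (x : S) : ∃ B : ι → ℝ, ∀ N, ∃ s ∈ Set.Ico N (N + m), ∀ l, d l x (f^[s] x) ≤ B l := by
  let D : ι → ℝ := fun l => ∑ i ∈ Finset.range (m + 1), d l x (f^[i] x)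
  have le_D : ∀ l i, i ≤ m → d l x (f^[i] x) ≤ D l := fun l i hi =>
    Finset.single_le_sum (f := fun i => d l x (f^[i] x)) (fun i _ => (d l).nonneg _ _)
      (Finset.mem_range.2 (by lia))
  have D_nonneg : ∀ l, 0 ≤ D l := fun l => Finset.sum_nonneg fun i _ => (d l).nonneg _ _
  have one_sub_pos : 0 < 1 - k := sub_pos.2 hk₁
  -- `B = D / (1 - k)` solves `B = D + k * B`.
  refine ⟨fun l => D l / (1 - k), exists_mem_Ico_of_forall_exists_add (fun l => ?_) fun n hn => ?_⟩
  · simpa using div_nonneg (D_nonneg l) one_sub_pos.le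
  · obtain ⟨i, hi, him, hfi⟩ := hf x (f^[n] x)
    refine ⟨i, hi, him, fun l => ?_⟩
    rw [Function.iterate_add_apply]
    calc d l x (f^[i] (f^[n] x))
        ≤ d l x (f^[i] x) + d l (f^[i] x) (f^[i] (f^[n] x)) := (d l).triangle _ _ _
      _ ≤ D l + k ^ i * d l x (f^[n] x) := add_le_add (le_D l i him) (hfi l)
      _ ≤ D l + k * (D l / (1 - k)) := by
        gcongr
        · exact (d l).nonneg _ _
        · exact pow_le_of_le_one hk₀ hk₁.le (by lia)
        · exact hn l
      _ = D l / (1 - k) := by field_simp; ring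

theorem exists_eventually_iterate_le (hf : IsIterateContraction d m k f) (hk₀ : 0 ≤ k)
    (hk₁ : k ≤ 1) {u : Ultrafilter ℕ} (hu : (u : Filter ℕ) ≤ atTop) {x : S} {B : ι → ℝ}
    (hB : ∀ N, ∃ s ∈ Set.Ico N (N + m), ∀ l, d l x (f^[s] x) ≤ B l) (N : ℕ) :
    ∃ b ∈ Set.Ico N (N + m), ∃ e ∈ Set.Iio m, ∀ᶠ n in (u : Filter ℕ), ∀ᶠ n' in (u : Filter ℕ),
      ∀ l, d l (f^[n] (f^[e] x)) (f^[n' + b] (f^[e] x)) ≤ k ^ n * B l := by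
  have pointwise : ∀ n, ∀ n' ≥ n, ∃ b ∈ Set.Ico N (N + m), ∃ e ∈ Set.Iio m,
      ∀ l, d l (f^[n] (f^[e] x)) (f^[n' + b] (f^[e] x)) ≤ k ^ n * B l := by
    intro n n' hn
    -- With `t = n + e` and `s = n' - n + b` the two points are `f^[t] x` and `f^[t] (f^[s] x)`.
    obtain ⟨s, ⟨hs, hs'⟩, hBs⟩ := hB (n' - n + N)
    obtain ⟨t, ⟨ht, ht'⟩, hft⟩ := hf.exists_iterate_le hk₀ x (f^[s] x) n
    refine ⟨s - (n' - n), ⟨by lia, by lia⟩, t - n, Set.mem_Iio.2 (by lia), fun l => ?_⟩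
    rw [← Function.iterate_add_apply, ← Function.iterate_add_apply, show n + (t - n) = t by lia,
      show n' + (s - (n' - n)) + (t - n) = t + s by lia, Function.iterate_add_apply]
    calc d l (f^[t] x) (f^[t] (f^[s] x)) ≤ k ^ t * d l x (f^[s] x) := hft l
      _ ≤ k ^ n * B l := mul_le_mul (pow_le_pow_of_le_one hk₀ hk₁ ht) (hBs l)
        ((d l).nonneg _ _) (pow_nonneg hk₀ n)
  have along_u := Eventually.of_forall (f := (u : Filter ℕ)) fun n =>
    ((eventually_ge_atTop n).filter_mono hu).mono (pointwise n)
  simpa only [Ultrafilter.eventually_exists_mem_iff (Set.finite_Ico N (N + m)),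
    Ultrafilter.eventually_exists_mem_iff (Set.finite_Iio m)] using along_u

variable [UniformSpace S]

theorem exists_infinite_tendsto_curry [Nonempty S] (hf : IsIterateContraction d m k f)
    (hd : IsGauge d) (hk₀ : 0 ≤ k) (hk₁ : k < 1) {u : Ultrafilter ℕ}
    (hu : (u : Filter ℕ) ≤ atTop) :
    ∃ y : S, {b | Tendsto (fun a : ℕ × ℕ => (f^[a.1] y, f^[a.2 + b] y))
      ((u : Filter ℕ).curry u) (𝓤 S)}.Infinite := by
  obtain ⟨x⟩ := ‹Nonempty S›
  obtain ⟨B, hB⟩ := hf.exists_bounded_returns hk₀ hk₁ x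
  have frequently_close : ∃ᶠ b in atTop, ∃ e ∈ Set.Iio m, ∀ᶠ n in (u : Filter ℕ),
      ∀ᶠ n' in (u : Filter ℕ), ∀ l,
        d l (f^[n] (f^[e] x)) (f^[n' + b] (f^[e] x)) ≤ k ^ n * B l :=
    frequently_atTop.2 fun N =>
      (hf.exists_eventually_iterate_le hk₀ hk₁.le hu hB N).imp fun b hb => ⟨hb.1.1, hb.2⟩
  obtain ⟨e, -, he⟩ := (frequently_exists_finite (Set.finite_Iio m)).1 frequently_close
  refine ⟨f^[e] x, (Nat.frequently_atTop_iff_infinite.1 he).mono fun b hb => ?_⟩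
  refine hd.tendsto_uniformity_iff.2 fun l => ?_
  have bound_tendsto : Tendsto (fun n => k ^ n * B l) u (𝓝 0) := by
    simpa only [zero_mul] using
      ((tendsto_pow_atTop_nhds_zero_of_lt_one hk₀ hk₁).mul_const (B l)).mono_left hu
  refine squeeze_zero' (g := fun a : ℕ × ℕ => k ^ a.1 * B l)
    (.of_forall fun a => (d l).nonneg _ _) ?_ ?_
  · exact eventually_curry_iff.2 (hb.mono fun n hn => hn.mono fun n' hn' => hn' l)
  · exact (bound_tendsto.comp tendsto_fst).mono_left curry_le_prod

theorem exists_infinite_tendsto [Nonempty S] [CompleteSpace S]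
    (hf : IsIterateContraction d m k f) (hd : IsGauge d) (hk₀ : 0 ≤ k) (hk₁ : k < 1)
    {u : Ultrafilter ℕ} (hu : (u : Filter ℕ) ≤ atTop) :
    ∃ y p : S, {b | Tendsto (fun n => f^[n + b] y) u (𝓝 p)}.Infinite := by
  obtain ⟨y, hy⟩ := hf.exists_infinite_tendsto_curry hd hk₀ hk₁ hu
  obtain ⟨b, hb⟩ := hy.nonempty
  obtain ⟨p, hp⟩ := cauchy_map_iff_exists_tendsto.1
    (cauchy_map_of_tendsto_curry (g := fun n => f^[n] y) (h := fun n => f^[n + b] y) hb)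
  exact ⟨y, p, hy.mono fun b hb =>
    tendsto_nhds_of_tendsto_curry (g := fun n => f^[n] y) (h := fun n => f^[n + b] y) hp hb⟩

theorem exists_tendsto_iterate (hf : IsIterateContraction d m k f) (hd : IsGauge d) (hk₀ : 0 ≤ k)
    {α : Type*} {u : Ultrafilter α} {g : α → S} {p : S} (hg : Tendsto g u (𝓝 p)) (N : ℕ) :
    ∃ i ∈ Set.Ico N (N + m), Tendsto (fun a => f^[i] (g a)) u (𝓝 (f^[i] p)) := by
  obtain ⟨i, hi, hfi⟩ := (Ultrafilter.eventually_exists_mem_iff (Set.finite_Ico N (N + m))).1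
    (Eventually.of_forall fun a => hf.exists_iterate_le hk₀ (g a) p N)
  refine ⟨i, hi, hd.tendsto_nhds_iff.2 fun l => squeeze_zero'
    (.of_forall fun a => (d l).nonneg _ _) (hfi.mono fun a ha => ha l) ?_⟩
  simpa only [mul_zero] using (hd.tendsto_nhds_iff.1 hg l).const_mul (k ^ i)

theorem exists_isPeriodicPt [Nonempty S] [CompleteSpace S] [T0Space S]
    (hf : IsIterateContraction d m k f) (hd : IsGauge d) (hk₀ : 0 ≤ k) (hk₁ : k < 1) :
    ∃ z : S, ∃ L > 0, Function.IsPeriodicPt f L z := by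
  obtain ⟨y, p, hyp⟩ := hf.exists_infinite_tendsto hd hk₀ hk₁ Nat.hyperfilter_le_atTop
  have shadow : ∀ b ∈ {b | Tendsto (fun n => f^[n + b] y) (hyperfilter ℕ) (𝓝 p)},
      ∃ r ∈ Set.Iio m, ∀ᶠ M in (hyperfilter ℕ : Filter ℕ), b ≤ M ∧
        Tendsto (fun n => f^[n + (M + r)] y) (hyperfilter ℕ) (𝓝 (f^[M + r - b] p)) := by
    refine fun b hb => (Ultrafilter.eventually_exists_mem_iff (Set.finite_Iio m)).1 ?_
    refine ((eventually_ge_atTop b).filter_mono Nat.hyperfilter_le_atTop).mono fun M hM => ?_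
    obtain ⟨i, ⟨hi, hi'⟩, hfi⟩ := hf.exists_tendsto_iterate hd hk₀ hb (M - b)
    refine ⟨i + b - M, Set.mem_Iio.2 (by lia), hM, ?_⟩
    rw [show M + (i + b - M) = i + b by lia, Nat.add_sub_cancel]
    refine hfi.congr fun n => ?_
    rw [← Function.iterate_add_apply, Nat.add_left_comm]
  choose! r hr h_shadow using shadow
  obtain ⟨b, hb, c, hc, hbc, hr_eq⟩ := hyp.exists_ne_map_eq_of_mapsTo hr (Set.finite_Iio m)
  obtain ⟨M, ⟨hbM, hb_lim⟩, hcM, hc_lim⟩ := ((h_shadow b hb).and (h_shadow c hc)).exists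
  have iterate_eq : f^[M + r b - b] p = f^[M + r b - c] p :=
    tendsto_nhds_unique hb_lim (hr_eq ▸ hc_lim)
  exact exists_isPeriodicPt_of_iterate_eq (by lia) iterate_eq

theorem exists_isFixedPt_of_isPeriodicPt [T0Space S] (hf : IsIterateContraction d m k f)
    (hd : IsGauge d) (hk₀ : 0 ≤ k) (hk₁ : k < 1) {z : S} {L : ℕ} (hL : 0 < L)
    (hz : Function.IsPeriodicPt f L z) : ∃ r : S, Function.IsFixedPt f r := by
  have mod_le : ∀ N, ∃ r ∈ Set.Iio L, ∀ l, d l (f^[r] (f z)) (f^[r] z) ≤ k ^ N * d l (f z) z := by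
    intro N
    obtain ⟨n, ⟨hn, -⟩, hfn⟩ := hf.exists_iterate_le hk₀ (f z) z N
    refine ⟨n % L, Nat.mod_lt n hL, fun l => ?_⟩
    rw [hz.iterate_mod_apply, hz.apply.iterate_mod_apply]
    exact (hfn l).trans (mul_le_mul_of_nonneg_right (pow_le_pow_of_le_one hk₀ hk₁.le hn)
      ((d l).nonneg _ _))
  obtain ⟨r, -, hr⟩ := (frequently_exists_finite (Set.finite_Iio L)).1
    (Frequently.of_forall (f := atTop) mod_le)
  refine ⟨f^[r] z, Inseparable.eq (hd.inseparable_iff.2 fun l => ?_)⟩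
  rw [← Function.iterate_succ_apply' f r z, Function.iterate_succ_apply]
  have bound_tendsto : Tendsto (fun N => k ^ N * d l (f z) z) atTop (𝓝 0) := by
    simpa only [zero_mul] using
      (tendsto_pow_atTop_nhds_zero_of_lt_one hk₀ hk₁).mul_const (d l (f z) z)
  exact (ge_of_tendsto_of_frequently bound_tendsto (hr.mono fun N hN => hN l)).antisymm
    ((d l).nonneg _ _)

theorem exists_isFixedPt [Nonempty S] [CompleteSpace S] [T0Space S]
    (hf : IsIterateContraction d m k f) (hd : IsGauge d) (hk₀ : 0 ≤ k) (hk₁ : k < 1) :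
    ∃ r : S, Function.IsFixedPt f r := by
  obtain ⟨z, L, hL, hz⟩ := hf.exists_isPeriodicPt hd hk₀ hk₁
  exact hf.exists_isFixedPt_of_isPeriodicPt hd hk₀ hk₁ hL hz

end IsIterateContraction

section UpperQuantile

variable {F G : ℝ → ℝ} {ε t : ℝ}

/-- The quantile of order `1 - ε` of a distance distribution function. -/
noncomputable def upperQuantile (F : ℝ → ℝ) (ε : ℝ) : ℝ :=
  sInf {t | 0 < t ∧ 1 - ε < F t}

theorem upperQuantile_nonneg (F : ℝ → ℝ) (ε : ℝ) : 0 ≤ upperQuantile F ε :=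
  Real.sInf_nonneg fun _ ht => ht.1.le

theorem upperQuantile_lt_iff (hF : MemDplus F) (hε : 0 < ε) (ht : 0 < t) :
    upperQuantile F ε < t ↔ 1 - ε < F t := by
  obtain ⟨⟨mono, left_cont, -⟩, tendsto_one⟩ := hF
  have level_nonempty : {t | 0 < t ∧ 1 - ε < F t}.Nonempty :=
    ((eventually_gt_atTop 0).and (tendsto_one.eventually_const_lt (sub_lt_self 1 hε))).exists
  constructor
  · intro h
    obtain ⟨s, hs, hst⟩ := exists_lt_of_csInf_lt level_nonempty h
    exact hs.2.trans_le (mono hst.le)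
  · intro h
    obtain ⟨s, hs, hs₀, hst⟩ := (((left_cont t ht).eventually_const_lt h).and
      (eventually_mem_set.2 (Ioo_mem_nhdsLT ht))).exists
    have quantile_le : upperQuantile F ε ≤ s := csInf_le ⟨0, fun _ hr => hr.1.le⟩ ⟨hs₀, hs⟩
    exact quantile_le.trans_lt hst

theorem upperQuantile_le_mul (hF : MemDplus F) (hG : MemDplus G) (hε : 0 < ε) {c : ℝ} (hc : 0 < c)
    (h : ∀ t, 0 < t → F t ≤ G (c * t)) : upperQuantile G ε ≤ c * upperQuantile F ε := by
  rw [← div_le_iff₀' hc]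
  refine le_of_forall_gt_imp_ge_of_dense fun t hFt => ?_
  have ht : 0 < t := (upperQuantile_nonneg F ε).trans_lt hFt
  rw [div_le_iff₀' hc]
  exact ((upperQuantile_lt_iff hG hε (mul_pos hc ht)).2
    (((upperQuantile_lt_iff hF hε ht).1 hFt).trans_le (h t ht))).le

end UpperQuantile

/-- A Menger space under `Min` with values in `D⁺`: the laws (PM1)-(PM3) for the family of distance
distribution functions `Φ p q`. -/
structure IsMengerSpace_s2 {S : Type*} (Φ : S → S → ℝ → ℝ) : Prop where
  memDplus : ∀ p q, MemDplus (Φ p q)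
  eq_one_iff : ∀ p q, (∀ t, 0 < t → Φ p q t = 1) ↔ p = q
  symm : ∀ p q, Φ p q = Φ q p
  min_le : ∀ p q r, ∀ s t : ℝ, 0 < s → 0 < t → min (Φ p q s) (Φ q r t) ≤ Φ p r (s + t)

namespace IsMengerSpace_s2

open scoped Topology Uniformity

variable {α S : Type*} {Φ : S → S → ℝ → ℝ}

theorem upperQuantile_triangle (hΦ : IsMengerSpace_s2 Φ) {ε : ℝ} (hε : 0 < ε) (p q r : S) :
    upperQuantile (Φ p r) ε ≤ upperQuantile (Φ p q) ε + upperQuantile (Φ q r) ε := by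
  refine le_of_forall_pos_le_add fun δ hδ => ?_
  have hs : 0 < upperQuantile (Φ p q) ε + δ / 2 := by
    linarith [upperQuantile_nonneg (Φ p q) ε]
  have ht : 0 < upperQuantile (Φ q r) ε + δ / 2 := by
    linarith [upperQuantile_nonneg (Φ q r) ε]
  have hpq := (upperQuantile_lt_iff (hΦ.memDplus p q) hε hs).1 (by linarith)
  have hqr := (upperQuantile_lt_iff (hΦ.memDplus q r) hε ht).1 (by linarith)
  have hpr := (upperQuantile_lt_iff (hΦ.memDplus p r) hε (add_pos hs ht)).2
    ((lt_min hpq hqr).trans_le (hΦ.min_le p q r _ _ hs ht))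
  linarith

/-- The pseudometrics `d n p q = inf {t > 0 | Φ p q t > 1 - 1 / (n + 1)}`. Levels of the form
`1 / (n + 1)` suffice to describe convergence, and a countable family gives a countably generated
uniformity, so that completeness can be tested on sequences. -/
noncomputable def pseudoMetric (hΦ : IsMengerSpace_s2 Φ) (n : ℕ) : PseudoMetric S ℝ where
  toFun p q := upperQuantile (Φ p q) (1 / (n + 1))
  refl' p := by
    refine le_antisymm (le_of_forall_gt_imp_ge_of_dense fun t ht => ?_) (upperQuantile_nonneg _ _)
    refine ((upperQuantile_lt_iff (hΦ.memDplus p p) Nat.one_div_pos_of_nat ht).2 ?_).le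
    rw [(hΦ.eq_one_iff p p).2 rfl t ht]
    exact sub_lt_self 1 Nat.one_div_pos_of_nat
  symm' p q := by rw [hΦ.symm]
  triangle' := hΦ.upperQuantile_triangle Nat.one_div_pos_of_nat

theorem pseudoMetric_lt_iff (hΦ : IsMengerSpace_s2 Φ) {n : ℕ} {p q : S} {t : ℝ} (ht : 0 < t) :
    hΦ.pseudoMetric n p q < t ↔ 1 - 1 / ((n : ℝ) + 1) < Φ p q t :=
  upperQuantile_lt_iff (hΦ.memDplus p q) Nat.one_div_pos_of_nat ht

variable [UniformSpace S]

theorem tendsto_uniformity_iff (hΦ : IsMengerSpace_s2 Φ) (hd : IsGauge hΦ.pseudoMetric)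
    {F : Filter α} {g : α → S × S} :
    Tendsto g F (𝓤 S) ↔ ∀ t, 0 < t → Tendsto (fun a => Φ (g a).1 (g a).2 t) F (𝓝 1) := by
  rw [hd.tendsto_uniformity_iff]
  constructor
  · intro h t ht
    refine tendsto_order.2 ⟨fun s hs => ?_, fun s hs => .of_forall fun a =>
      ((hΦ.memDplus _ _).1.2.2.1 t).2.trans_lt hs⟩
    obtain ⟨n, hn⟩ := exists_nat_one_div_lt (sub_pos.2 hs)
    filter_upwards [(h n).eventually_lt_const ht] with a ha
    linarith [(hΦ.pseudoMetric_lt_iff ht).1 ha]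
  · intro h n
    refine tendsto_order.2 ⟨fun s hs => .of_forall fun a =>
      hs.trans_le ((hΦ.pseudoMetric n).nonneg _ _), fun t ht => ?_⟩
    filter_upwards [(h t ht).eventually_const_lt (sub_lt_self 1 Nat.one_div_pos_of_nat)] with a ha
    exact (hΦ.pseudoMetric_lt_iff ht).2 ha

theorem tendsto_nhds_iff (hΦ : IsMengerSpace_s2 Φ) (hd : IsGauge hΦ.pseudoMetric) {F : Filter α}
    {g : α → S} {p : S} :
    Tendsto g F (𝓝 p) ↔ ∀ t, 0 < t → Tendsto (fun a => Φ (g a) p t) F (𝓝 1) := by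
  rw [Uniform.tendsto_nhds_left, hΦ.tendsto_uniformity_iff hd]

theorem t0Space (hΦ : IsMengerSpace_s2 Φ) (hd : IsGauge hΦ.pseudoMetric) : T0Space S := by
  refine ⟨fun p q hpq => (hΦ.eq_one_iff p q).1 fun t ht => ?_⟩
  have const_tendsto : Tendsto (fun _ : ℕ => p) atTop (𝓝 q) := hpq ▸ tendsto_const_nhds
  exact tendsto_const_nhds_iff.1 ((hΦ.tendsto_nhds_iff hd).1 const_tendsto t ht)

theorem completeSpace (hΦ : IsMengerSpace_s2 Φ) (hd : IsGauge hΦ.pseudoMetric)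
    (hComplete : ∀ x : ℕ → S,
      (∀ t : ℝ, 0 < t → ∀ ε : ℝ, 0 < ε → ∃ N : ℕ, ∀ n m : ℕ, N ≤ n → N ≤ m →
        1 - ε < Φ (x n) (x m) t) →
      ∃ p : S, ∀ t : ℝ, 0 < t → Tendsto (fun n => Φ (x n) p t) atTop (𝓝 1)) :
    CompleteSpace S := by
  have := hd.isCountablyGenerated_uniformity
  refine UniformSpace.complete_of_cauchySeq_tendsto fun x hx => ?_
  refine (hComplete x fun t ht ε hε => ?_).imp fun p => (hΦ.tendsto_nhds_iff hd).2
  have hΦx := (hΦ.tendsto_uniformity_iff hd).1 (cauchySeq_iff_tendsto.1 hx) t ht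
  obtain ⟨N, hN⟩ := eventually_atTop_prod_self'.1
    (hΦx.eventually_const_lt (sub_lt_self 1 hε))
  exact ⟨N, fun n m hn hm => hN n hn m hm⟩

end IsMengerSpace_s2

/-- **Generalized fixed point theorem in Menger spaces.** In a complete Menger space
under `Min` with values in `D⁺`, every probabilistic `(m,k)`-B-contraction has a
fixed point. -/
theorem mk_b_contraction_fixed_point
    {S : Type*} [Nonempty S] (Φ : S → S → ℝ → ℝ)
    (hDplus : ∀ p q : S, MemDplus (Φ p q))
    (hPM1 : ∀ p q : S, (∀ t : ℝ, 0 < t → Φ p q t = 1) ↔ p = q)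
    (hPM2 : ∀ p q : S, Φ p q = Φ q p)
    (hPM3 : ∀ p q r : S, ∀ s t : ℝ, 0 < s → 0 < t →
      min (Φ p q s) (Φ q r t) ≤ Φ p r (s + t))
    (hComplete : ∀ x : ℕ → S,
      (∀ t : ℝ, 0 < t → ∀ ε : ℝ, 0 < ε → ∃ N : ℕ, ∀ n m : ℕ, N ≤ n → N ≤ m →
        1 - ε < Φ (x n) (x m) t) →
      ∃ p : S, ∀ t : ℝ, 0 < t → Tendsto (fun n => Φ (x n) p t) atTop (nhds 1))
    (m : ℕ) (hm : 1 ≤ m) (k : ℝ) (hk : k ∈ Set.Ioo (0 : ℝ) 1)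
    (f : S → S)
    (hf : ∀ p q : S, ∃ i : ℕ, 1 ≤ i ∧ i ≤ m ∧
      ∀ t : ℝ, 0 < t → Φ p q t ≤ Φ (f^[i] p) (f^[i] q) (k ^ i * t)) :
    ∃ r : S, f r = r := by
  have hΦ : IsMengerSpace_s2 Φ := ⟨hDplus, hPM1, hPM2, hPM3⟩
  have contraction : IsIterateContraction hΦ.pseudoMetric m k f := fun p q =>
    (hf p q).imp fun i ⟨hi, him, hfi⟩ => ⟨hi, him, fun _ =>
      upperQuantile_le_mul (hDplus _ _) (hDplus _ _) Nat.one_div_pos_of_nat (pow_pos hk.1 i) hfi⟩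
  let _ : UniformSpace S := gaugeUniformSpace hΦ.pseudoMetric
  have gauge : IsGauge hΦ.pseudoMetric := isGauge_gaugeUniformSpace _
  have := hΦ.completeSpace gauge hComplete
  have := hΦ.t0Space gauge
  exact contraction.exists_isFixedPt gauge hk.1.le hk.2
end

section
/- Let (S, Φ) be a probabilistic semi-metric space, let m ≥ 1 be an integer and k ∈ (0,1), and let f : S → S be a probabilistic (m,k)-B-contraction. Then for any p, q ∈ S the set I = {i ∈ ℕ : F_{f^i p, f^i q}(t) ≥ F_{p,q}(t / k^i) for all t > 0} is m-syndetic. -/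
/-- A set `I ⊆ ℕ` is `m`-syndetic if `I ∩ [n, n + m)` is nonempty for every `n`. -/
def MSyndetic (m : ℕ) (I : Set ℕ) : Prop :=
  ∀ n : ℕ, ∃ i ∈ I, n ≤ i ∧ i < n + m

theorem MSyndetic.of_forall_exists_lt_le_add {m i₀ : ℕ} {I : Set ℕ} (hi₀ : i₀ ∈ I)
    (hi₀m : i₀ < m) (hI : ∀ i ∈ I, ∃ j ∈ I, i < j ∧ j ≤ i + m) : MSyndetic m I := by
  intro n
  induction n with
  | zero => exact ⟨i₀, hi₀, i₀.zero_le, by omega⟩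
  | succ n ih =>
    obtain ⟨i, hi, hni, hin⟩ := ih
    obtain rfl | hlt := hni.eq_or_lt
    · obtain ⟨j, hj, hij, hji⟩ := hI n hi
      exact ⟨j, hj, hij, by omega⟩
    · exact ⟨i, hi, hlt, by omega⟩

section BContraction

variable {S K α : Type*} [CommGroupWithZero K] [LinearOrder K] [Preorder α]

/-- The probabilistic `(m,k)`-B-contractions `f` of a set `S` with distances `Φ p q`. The type `K`
of the parameter and the type `α` of the values are both `ℝ` in a PSM-space. -/
def IsProbBContraction (Φ : S → S → K → α) (m : ℕ) (k : K) (f : S → S) : Prop :=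
  ∀ p q : S, ∃ i : ℕ, 1 ≤ i ∧ i ≤ m ∧
    ∀ t : K, 0 < t → Φ p q t ≤ Φ (f^[i] p) (f^[i] q) (k ^ i * t)

/-- The set `I` of the exponents `i` such that `f^[i]` contracts the pair `p, q` by the factor
`k ^ i`. Here `k ^ i` divides the parameter on the left, whereas in `IsProbBContraction` it
multiplies it on the right; the two forms agree by `mem_contractionTimes_iff`. -/
def contractionTimes (Φ : S → S → K → α) (k : K) (f : S → S) (p q : S) : Set ℕ :=
  {i | ∀ t : K, 0 < t → Φ p q (t / k ^ i) ≤ Φ (f^[i] p) (f^[i] q) t}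

variable {Φ : S → S → K → α} {m i j : ℕ} {k : K} {f : S → S} {p q : S}

theorem zero_mem_contractionTimes : 0 ∈ contractionTimes Φ k f p q := by
  intro t _
  simp

variable [ZeroLEOneClass K] [PosMulStrictMono K]

theorem mem_contractionTimes_iff (hk : 0 < k) :
    i ∈ contractionTimes Φ k f p q ↔
      ∀ t : K, 0 < t → Φ p q t ≤ Φ (f^[i] p) (f^[i] q) (k ^ i * t) := by
  have hki : 0 < k ^ i := pow_pos hk i
  constructor
  · intro h t ht
    simpa only [mul_div_cancel_left₀ t hki.ne'] using h (k ^ i * t) (mul_pos hki ht)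
  · intro h t ht
    simpa only [mul_div_cancel₀ t hki.ne'] using h (t / k ^ i) (div_pos ht hki)

theorem add_mem_contractionTimes (hk : 0 < k) (hi : i ∈ contractionTimes Φ k f p q)
    (hj : j ∈ contractionTimes Φ k f (f^[i] p) (f^[i] q)) :
    j + i ∈ contractionTimes Φ k f p q := by
  intro t ht
  rw [Function.iterate_add_apply, Function.iterate_add_apply]
  calc Φ p q (t / k ^ (j + i))
      = Φ p q (t / k ^ j / k ^ i) := by rw [pow_add, div_div]
    _ ≤ Φ (f^[i] p) (f^[i] q) (t / k ^ j) := hi _ (div_pos ht (pow_pos hk j))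
    _ ≤ Φ (f^[j] (f^[i] p)) (f^[j] (f^[i] q)) t := hj t ht

theorem IsProbBContraction.exists_mem_contractionTimes (hf : IsProbBContraction Φ m k f)
    (hk : 0 < k) (p q : S) : ∃ i ∈ contractionTimes Φ k f p q, 1 ≤ i ∧ i ≤ m := by
  obtain ⟨i, hi, him, hcontr⟩ := hf p q
  exact ⟨i, (mem_contractionTimes_iff hk).2 hcontr, hi, him⟩

theorem mk_b_contraction_syndetic_general (hk : 0 < k) (hf : IsProbBContraction Φ m k f)
    (p q : S) : MSyndetic m (contractionTimes Φ k f p q) := by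
  have hm : 0 < m := by
    obtain ⟨i, -, hi, him⟩ := hf.exists_mem_contractionTimes hk p q
    exact hi.trans him
  refine .of_forall_exists_lt_le_add zero_mem_contractionTimes hm fun i hi => ?_
  -- The gap after `i` is a contraction time of the pair that `p, q` has reached at time `i`.
  obtain ⟨j, hj, hj1, hjm⟩ := hf.exists_mem_contractionTimes hk (f^[i] p) (f^[i] q)
  exact ⟨j + i, add_mem_contractionTimes hk hi hj, by omega, by omega⟩

end BContraction

/-- In a PSM-space, if `f` is a probabilistic `(m,k)`-B-contraction, then for any `p q`
the set `{i : F_{f^i p, f^i q}(t) ≥ F_{p,q}(t / k^i) for all t > 0}` is `m`-syndetic. -/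
theorem mk_b_contraction_syndetic
    {S : Type*} [Nonempty S] (Φ : S → S → ℝ → ℝ)
    (hDDF : ∀ p q : S, IsDDF (Φ p q))
    (hPM1 : ∀ p q : S, (∀ t : ℝ, 0 < t → Φ p q t = 1) ↔ p = q)
    (hPM2 : ∀ p q : S, Φ p q = Φ q p)
    (m : ℕ) (hm : 1 ≤ m) (k : ℝ) (hk : k ∈ Set.Ioo (0 : ℝ) 1)
    (f : S → S)
    (hf : ∀ p q : S, ∃ i : ℕ, 1 ≤ i ∧ i ≤ m ∧
      ∀ t : ℝ, 0 < t → Φ p q t ≤ Φ (f^[i] p) (f^[i] q) (k ^ i * t))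
    (p q : S) :
    MSyndetic m
      {i : ℕ | ∀ t : ℝ, 0 < t → Φ p q (t / k ^ i) ≤ Φ (f^[i] p) (f^[i] q) t} :=
  mk_b_contraction_syndetic_general hk.1 hf p q
end

section
/- Let (S, Φ) be a Menger space under Min whose probabilistic metric takes values in D⁺, let m ≥ 1 be an integer and k ∈ (0,1), let f : S → S be a probabilistic (m,k)-B-contraction, and let p ∈ S. Then there exists a d.d.f. F ∈ D⁺ such that the set I = {i ∈ ℕ : F_{f^i p, p}(t) ≥ F(t) for all t > 0} is m-syndetic. -/
open Filter

/-!
Let `F` be the minimum of `F_{f^i p, p}` over `0 ≤ i ≤ m`. The scaled function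
`t ↦ F ((1 - k) t)` also lies in `D⁺`. If it is a lower bound of `F_{f^n p, p}`, then the
contraction property of the pair `(f^n p, p)` yields `1 ≤ i ≤ m` for which
`F_{f^(n+i) p, f^i p}(k t) ≥ F ((1 - k) t)`, and the triangle inequality for
`t = k t + (1 - k) t`, together with `F_{f^i p, p} ≥ F`, makes it a lower bound of
`F_{f^(n+i) p, p}`. So consecutive return times are at most `m` apart.
-/

theorem IsDDF.inf {F G : ℝ → ℝ} (hF : IsDDF F) (hG : IsDDF G) : IsDDF (F ⊓ G) := by
  obtain ⟨monoF, contF, boundF, zeroF⟩ := hF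
  obtain ⟨monoG, contG, boundG, zeroG⟩ := hG
  exact ⟨monoF.inf monoG, fun t ht => (contF t ht).inf (contG t ht),
    fun t => ⟨le_inf (boundF t).1 (boundG t).1, inf_le_left.trans (boundF t).2⟩,
    fun t ht => by simp [zeroF t ht, zeroG t ht]⟩

theorem IsDDF.comp_const_mul {F : ℝ → ℝ} (hF : IsDDF F) {c : ℝ} (hc : 0 < c) :
    IsDDF (fun t => F (c * t)) := by
  obtain ⟨mono, cont, bound, zero⟩ := hF
  have mapsTo (t : ℝ) : Set.MapsTo (c * ·) (Set.Iio t) (Set.Iio (c * t)) :=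
    fun _ hx => mul_lt_mul_of_pos_left hx hc
  exact ⟨fun _ _ hxy => mono (mul_le_mul_of_nonneg_left hxy hc.le),
    fun t ht => (cont (c * t) (mul_pos hc ht)).comp (by fun_prop) (mapsTo t),
    fun t => bound (c * t),
    fun t ht => zero (c * t) (mul_nonpos_of_nonneg_of_nonpos hc.le ht)⟩

theorem MemDplus.inf {F G : ℝ → ℝ} (hF : MemDplus F) (hG : MemDplus G) : MemDplus (F ⊓ G) :=
  ⟨hF.1.inf hG.1, inf_idem (1 : ℝ) ▸ hF.2.inf_nhds hG.2⟩

theorem MemDplus.finset_inf' {ι : Type*} {s : Finset ι} (hs : s.Nonempty) {G : ι → ℝ → ℝ}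
    (hG : ∀ i ∈ s, MemDplus (G i)) : MemDplus (s.inf' hs G) :=
  Finset.inf'_induction hs G (fun _ hF _ hF' => hF.inf hF') hG

theorem MemDplus.comp_const_mul {F : ℝ → ℝ} (hF : MemDplus F) {c : ℝ} (hc : 0 < c) :
    MemDplus (fun t => F (c * t)) :=
  ⟨hF.1.comp_const_mul hc, hF.2.comp (tendsto_id.const_mul_atTop hc)⟩

theorem MSyndetic.of_exists_add_mem {m : ℕ} {I : Set ℕ} (zero_mem : 0 ∈ I)
    (exists_add_mem : ∀ n ∈ I, ∃ i, 1 ≤ i ∧ i ≤ m ∧ n + i ∈ I) : MSyndetic m I := by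
  intro n
  induction n with
  | zero =>
    obtain ⟨i, hi, him, -⟩ := exists_add_mem 0 zero_mem
    exact ⟨0, zero_mem, le_rfl, by omega⟩
  | succ n ih =>
    obtain ⟨j, hj, hnj, hjm⟩ := ih
    rcases hnj.eq_or_lt with rfl | hlt
    · obtain ⟨i, hi, him, hni⟩ := exists_add_mem n hj
      exact ⟨n + i, hni, by omega, by omega⟩
    · exact ⟨j, hj, hlt, by omega⟩

/-- The triangle inequality (PM3) of a Menger space under `Min`, as a property of the
family `Φ q r` of distance functions alone. -/
def MinTriangle {S : Type*} (Φ : S → S → ℝ → ℝ) : Prop :=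
  ∀ p q r : S, ∀ s t : ℝ, 0 < s → 0 < t → min (Φ p q s) (Φ q r t) ≤ Φ p r (s + t)

/-- The times at which the orbit of `p` under `f` is as close to `p` as `F` prescribes: the set `I`
of the theorem. -/
def returnTimes {S : Type*} (Φ : S → S → ℝ → ℝ) (f : S → S) (p : S) (F : ℝ → ℝ) : Set ℕ :=
  {i | ∀ t : ℝ, 0 < t → F t ≤ Φ (f^[i] p) p t}

section

variable {S : Type*} {Φ : S → S → ℝ → ℝ} {k : ℝ} {F : ℝ → ℝ}

theorem MinTriangle.scaled_le (hΦ : MinTriangle Φ) (hk : k ∈ Set.Ioo (0 : ℝ) 1) {x y z : S}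
    (hxy : ∀ t : ℝ, 0 < t → F ((1 - k) * t) ≤ Φ x y (k * t))
    (hyz : ∀ t : ℝ, 0 < t → F t ≤ Φ y z t) {t : ℝ} (ht : 0 < t) :
    F ((1 - k) * t) ≤ Φ x z t := by
  have hkt : 0 < k * t := mul_pos hk.1 ht
  have hkt' : 0 < (1 - k) * t := mul_pos (sub_pos.2 hk.2) ht
  calc F ((1 - k) * t)
      ≤ min (Φ x y (k * t)) (Φ y z ((1 - k) * t)) := le_min (hxy t ht) (hyz _ hkt')
    _ ≤ Φ x z (k * t + (1 - k) * t) := hΦ x y z _ _ hkt hkt'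
    _ = Φ x z t := by rw [← add_mul, add_sub_cancel, one_mul]

theorem add_mem_returnTimes (hmono : ∀ q r : S, Monotone (Φ q r)) (hΦ : MinTriangle Φ)
    (hk : k ∈ Set.Ioo (0 : ℝ) 1) {f : S → S} {p : S} {n i : ℕ} (hi : 1 ≤ i)
    (hcontr : ∀ t : ℝ, 0 < t → Φ (f^[n] p) p t ≤ Φ (f^[i] (f^[n] p)) (f^[i] p) (k ^ i * t))
    (hiF : i ∈ returnTimes Φ f p F) (hn : n ∈ returnTimes Φ f p fun t => F ((1 - k) * t)) :
    n + i ∈ returnTimes Φ f p fun t => F ((1 - k) * t) := by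
  intro t ht
  rw [add_comm, Function.iterate_add_apply]
  refine hΦ.scaled_le hk (fun t ht => ?_) hiF ht
  have hki : k ^ i ≤ k := pow_le_of_le_one hk.1.le hk.2.le (by omega)
  calc F ((1 - k) * t)
      ≤ Φ (f^[n] p) p t := hn t ht
    _ ≤ Φ (f^[i] (f^[n] p)) (f^[i] p) (k ^ i * t) := hcontr t ht
    _ ≤ Φ (f^[i] (f^[n] p)) (f^[i] p) (k * t) := hmono _ _ (by gcongr)

theorem mk_b_contraction_syndetic_ddf_general (hDplus : ∀ q r : S, MemDplus (Φ q r))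
    (hΦ : MinTriangle Φ) {m : ℕ} (hk : k ∈ Set.Ioo (0 : ℝ) 1) {f : S → S} {p : S}
    (hf : ∀ q : S, ∃ i : ℕ, 1 ≤ i ∧ i ≤ m ∧
      ∀ t : ℝ, 0 < t → Φ q p t ≤ Φ (f^[i] q) (f^[i] p) (k ^ i * t)) :
    ∃ F : ℝ → ℝ, MemDplus F ∧ MSyndetic m (returnTimes Φ f p F) := by
  let F : ℝ → ℝ := (Finset.range (m + 1)).inf' Finset.nonempty_range_add_one
    fun i => Φ (f^[i] p) p
  have hF : MemDplus F := .finset_inf' _ fun i _ => hDplus (f^[i] p) p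
  have hF_mem {i : ℕ} (him : i ≤ m) : i ∈ returnTimes Φ f p F :=
    fun t _ => Finset.inf'_le (fun i => Φ (f^[i] p) p) (Finset.mem_range_succ_iff.2 him) t
  refine ⟨_, hF.comp_const_mul (sub_pos.2 hk.2), .of_exists_add_mem (fun t ht => ?_) fun n hn => ?_⟩
  · have h_scale : (1 - k) * t ≤ t := mul_le_of_le_one_left ht.le (sub_le_self 1 hk.1.le)
    exact (hF.1.1 h_scale).trans (hF_mem m.zero_le t ht)
  · obtain ⟨i, hi, him, hcontr⟩ := hf (f^[n] p)
    have hmono (q r : S) : Monotone (Φ q r) := (hDplus q r).1.1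
    exact ⟨i, hi, him, add_mem_returnTimes hmono hΦ hk hi hcontr (hF_mem him) hn⟩

end

/-- In a Menger space under `Min` with values in `D⁺`, if `f` is a probabilistic
`(m,k)`-B-contraction and `p ∈ S`, then there is a d.d.f. `F ∈ D⁺` such that
`{i : F_{f^i p, p}(t) ≥ F(t) for all t > 0}` is `m`-syndetic. -/
theorem mk_b_contraction_syndetic_ddf
    {S : Type*} [Nonempty S] (Φ : S → S → ℝ → ℝ)
    (hDplus : ∀ p q : S, MemDplus (Φ p q))
    (hPM1 : ∀ p q : S, (∀ t : ℝ, 0 < t → Φ p q t = 1) ↔ p = q)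
    (hPM2 : ∀ p q : S, Φ p q = Φ q p)
    (hPM3 : ∀ p q r : S, ∀ s t : ℝ, 0 < s → 0 < t →
      min (Φ p q s) (Φ q r t) ≤ Φ p r (s + t))
    (m : ℕ) (hm : 1 ≤ m) (k : ℝ) (hk : k ∈ Set.Ioo (0 : ℝ) 1)
    (f : S → S)
    (hf : ∀ p q : S, ∃ i : ℕ, 1 ≤ i ∧ i ≤ m ∧
      ∀ t : ℝ, 0 < t → Φ p q t ≤ Φ (f^[i] p) (f^[i] q) (k ^ i * t))
    (p : S) :
    ∃ F : ℝ → ℝ, MemDplus F ∧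
      MSyndetic m {i : ℕ | ∀ t : ℝ, 0 < t → F t ≤ Φ (f^[i] p) p t} :=
  mk_b_contraction_syndetic_ddf_general hDplus hPM3 hk (hf · p)
end

section
/- Let m ≥ 1 be an integer and let R ⊆ ℕ × ℕ be a relation such that (i) the set {i ∈ ℕ : (i, 0) ∈ R} is m-syndetic, and (ii) whenever (i, j) ∈ R, the set {k ∈ ℕ : (i+k, j+k) ∈ R} is m-syndetic. Then there exists a set I ⊆ ℕ with upper Banach density d*(I) ≥ 1/(2m²) such that for every i, j ∈ I there exists k ∈ ℕ with (k, i) ∈ R and (k, j) ∈ R. -/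
/-- The upper Banach density of a set `I ⊆ ℕ`:
`d*(I) = inf_{m ≥ 1} sup_{k ∈ ℕ} |I ∩ [k, k+m)| / m`. -/
noncomputable def upperBanachDensity (I : Set ℕ) : ℝ :=
  ⨅ m : {m : ℕ // 1 ≤ m}, ⨆ k : ℕ, ((I ∩ Set.Ico k (k + m.1)).ncard : ℝ) / (m.1 : ℝ)

/-!
Each `i` with `(i, 0) ∈ R` starts a diagonal `{(i + j, j)}` which meets `R` at least `N / m` times
over `j < N`, and there are at least `⌊K / m⌋` such `i < K`. Hence the fibres `{j | (k, j) ∈ R}`,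
averaged over `k < K`, fill a proportion at least `1 / m² - o(1)` of `[0, N)` as `K → ∞`, for every
multiple `N` of `m`. Regard the fibres as points of the Cantor space `ℕ → Bool` and let `μ` be a
weak limit point of their empirical measures. It is carried by the closure of the set of fibres, and
the density on each such prefix `[0, N)` has `μ`-integral at least `1 / m²`. By the reverse Fatou
lemma some `I` in that closure has upper density at least `1 / m²`. Every finite subset of `I` lies
in a single fibre, that is, has a common `R`-predecessor.
-/

open Filter MeasureTheory
open scoped ENNReal

section EmpiricalMeasure

variable {X : Type*} [MeasurableSpace X]

/-- The empirical measure of the sample `x 0, …, x n`. It has `n + 1` points, so that it is a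
probability measure for every `n`. -/
noncomputable def empiricalMeasure (x : ℕ → X) (n : ℕ) : Measure X :=
  ((n + 1 : ℕ) : ℝ≥0∞)⁻¹ • ∑ k ∈ Finset.range (n + 1), Measure.dirac (x k)

instance isProbabilityMeasure_empiricalMeasure (x : ℕ → X) (n : ℕ) :
    IsProbabilityMeasure (empiricalMeasure x n) where
  measure_univ := by
    simp only [empiricalMeasure, Measure.smul_apply, Measure.finsetSum_apply, measure_univ,
      Finset.sum_const, Finset.card_range, nsmul_one, smul_eq_mul]
    exact ENNReal.inv_mul_cancel (by simp) (ENNReal.natCast_ne_top _)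

theorem integral_empiricalMeasure [MeasurableSingletonClass X] (x : ℕ → X) (n : ℕ) (f : X → ℝ) :
    ∫ a, f a ∂empiricalMeasure x n =
      (∑ k ∈ Finset.range (n + 1), f (x k)) / ((n + 1 : ℕ) : ℝ) := by
  rw [empiricalMeasure, integral_smul_measure, integral_finsetSum_measure]
  · simp only [integral_dirac, ENNReal.toReal_inv, ENNReal.toReal_natCast, smul_eq_mul,
      inv_mul_eq_div]
  · exact fun k _ ↦ integrable_dirac (by simp)

variable [TopologicalSpace X] [CompactSpace X] [T2Space X] [BorelSpace X]

theorem exists_probabilityMeasure_forall_le_integral (x : ℕ → X) :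
    ∃ μ : ProbabilityMeasure X, ∀ (f : C(X, ℝ)) (c : ℝ),
      (∀ c' < c, ∀ᶠ K : ℕ in atTop, c' * K ≤ ∑ k ∈ Finset.range K, f (x k)) →
        c ≤ ∫ a, f a ∂μ := by
  let ν (n : ℕ) : ProbabilityMeasure X := ⟨empiricalMeasure x n, inferInstance⟩
  obtain ⟨μ, hμ⟩ := exists_clusterPt_of_compactSpace (map ν atTop)
  refine ⟨μ, fun f c hc ↦ le_of_forall_lt_imp_le_of_dense fun c' hc' ↦ ?_⟩
  have hclosed : IsClosed {ρ : ProbabilityMeasure X | c' ≤ ∫ a, f a ∂ρ} :=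
    isClosed_le continuous_const <|
      ProbabilityMeasure.continuous_integral_boundedContinuousFunction
        (BoundedContinuousFunction.mkOfCompact f)
  refine isClosed_iff_clusterPt.1 hclosed μ (hμ.mono (le_principal_iff.2 (mem_map.2 ?_)))
  filter_upwards [(tendsto_add_atTop_nat 1).eventually (hc c' hc')] with n hn
  change c' ≤ ∫ a, f a ∂empiricalMeasure x n
  rwa [integral_empiricalMeasure, le_div_iff₀ (by positivity)]

end EmpiricalMeasure

theorem exists_forall_lt_frequently_lt_of_le_integral {Ω : Type*} [MeasurableSpace Ω]
    {μ : Measure Ω} [IsProbabilityMeasure μ] {f : ℕ → Ω → ℝ} {b c : ℝ}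
    (hf : ∀ n, Measurable (f n)) (hf₀ : ∀ n ω, 0 ≤ f n ω) (hfb : ∀ n ω, f n ω ≤ b)
    (hc : ∀ n, c ≤ ∫ ω, f n ω ∂μ) :
    ∃ ω, ∀ c' < c, ∃ᶠ n in atTop, c' < f n ω := by
  let g (n : ℕ) (ω : Ω) : ℝ≥0∞ := ENNReal.ofReal (f n ω)
  have hgb (n : ℕ) (ω : Ω) : g n ω ≤ ENNReal.ofReal b := ENNReal.ofReal_le_ofReal (hfb n ω)
  have hcg (n : ℕ) : ENNReal.ofReal c ≤ ∫⁻ ω, g n ω ∂μ := by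
    have hint : Integrable (f n) μ := .of_bound (hf n).aestronglyMeasurable b <|
      .of_forall fun ω ↦ by simpa [abs_of_nonneg (hf₀ n ω)] using hfb n ω
    rw [← ofReal_integral_eq_lintegral_ofReal hint (.of_forall (hf₀ n))]
    exact ENNReal.ofReal_le_ofReal (hc n)
  have fatou : ENNReal.ofReal c ≤ ∫⁻ ω, limsup (g · ω) atTop ∂μ :=
    calc ENNReal.ofReal c ≤ limsup (fun n ↦ ∫⁻ ω, g n ω ∂μ) atTop :=
          le_limsup_of_frequently_le (.of_forall hcg)
      _ ≤ ∫⁻ ω, limsup (g · ω) atTop ∂μ :=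
          limsup_lintegral_le (fun _ ↦ ENNReal.ofReal b) (fun n ↦ (hf n).ennreal_ofReal)
            (fun n ↦ .of_forall (hgb n)) (by simp)
  have hfin : ∫⁻ ω, limsup (g · ω) atTop ∂μ ≠ ∞ :=
    ((lintegral_mono fun ω ↦ limsup_le_of_le (h := .of_forall (hgb · ω))).trans_lt
      (by simp)).ne
  obtain ⟨ω, hω⟩ := exists_lintegral_le hfin
  refine ⟨ω, fun c' hc' ↦ ?_⟩
  obtain hneg | hnonneg := lt_or_ge c' 0
  · exact .of_forall fun n ↦ hneg.trans_le (hf₀ n ω)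
  · have hlt : ENNReal.ofReal c' < limsup (g · ω) atTop :=
      ((ENNReal.ofReal_lt_ofReal_iff_of_nonneg hnonneg).2 hc').trans_le (fatou.trans hω)
    exact (frequently_lt_of_lt_limsup (h := hlt)).mono fun n hn ↦
      (ENNReal.ofReal_lt_ofReal_iff_of_nonneg hnonneg).1 hn

theorem exists_mem_closure_range_forall_lt_frequently_lt {X : Type*} [TopologicalSpace X]
    [CompactSpace X] [T2Space X] (x : ℕ → X) {f : ℕ → C(X, ℝ)} {b c : ℝ}
    (hf₀ : ∀ n a, 0 ≤ f n a) (hfb : ∀ n a, f n a ≤ b)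
    (hc : ∀ n, ∀ c' < c, ∀ᶠ K : ℕ in atTop, c' * K ≤ ∑ k ∈ Finset.range K, f n (x k)) :
    ∃ a ∈ closure (Set.range x), ∀ c' < c, ∃ᶠ n in atTop, c' < f n a := by
  let Y := closure (Set.range x)
  let y (k : ℕ) : Y := ⟨x k, subset_closure (Set.mem_range_self k)⟩
  let g (n : ℕ) : C(Y, ℝ) := (f n).restrict Y
  let _ : MeasurableSpace Y := borel Y
  have : BorelSpace Y := ⟨rfl⟩
  have : CompactSpace Y := isCompact_iff_compactSpace.1 isClosed_closure.isCompact
  obtain ⟨μ, hμ⟩ := exists_probabilityMeasure_forall_le_integral y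
  obtain ⟨a, ha⟩ := exists_forall_lt_frequently_lt_of_le_integral (μ := (μ : Measure Y))
    (fun n ↦ (g n).continuous.measurable) (fun n a ↦ hf₀ n a) (fun n a ↦ hfb n a)
    (fun n ↦ hμ (g n) c (hc n))
  exact ⟨a, a.2, ha⟩

section Count

theorem sum_range_count_comm (r : ℕ → ℕ → Prop) [∀ i j, Decidable (r i j)] (K N : ℕ) :
    ∑ i ∈ Finset.range K, Nat.count (r i) N = ∑ j ∈ Finset.range N, Nat.count (r · j) K := by
  simp only [Nat.count_eq_card_filter_range]
  exact Finset.sum_card_bipartiteAbove_eq_sum_card_bipartiteBelow r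

theorem ncard_inter_Ico_add (I : Set ℕ) (k n : ℕ) [DecidablePred fun i ↦ k + i ∈ I] :
    (I ∩ Set.Ico k (k + n)).ncard = Nat.count (fun i ↦ k + i ∈ I) n := by
  have himage : I ∩ Set.Ico k (k + n) =
      (k + ·) '' ((Finset.range n).filter fun i ↦ k + i ∈ I : Finset ℕ) := by
    ext j
    simp only [Set.mem_inter_iff, Set.mem_Ico, Finset.coe_filter, Finset.mem_range, Set.mem_image,
      Set.mem_ofPred_eq]
    constructor
    · rintro ⟨hj, hkj, hjn⟩
      exact ⟨j - k, ⟨by omega, by rwa [Nat.add_sub_of_le hkj]⟩, Nat.add_sub_of_le hkj⟩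
    · rintro ⟨i, ⟨hi, hI⟩, rfl⟩
      exact ⟨hI, by omega, by omega⟩
  rw [himage, Set.ncard_image_of_injective _ (add_right_injective k), Set.ncard_coe_finset,
    Nat.count_eq_card_filter_range]

theorem count_mul_le_of_forall_count_add_le {p : ℕ → Prop} [DecidablePred p] {m : ℕ} {b : ℝ}
    (hb : ∀ k, (Nat.count (fun i ↦ p (k + i)) m : ℝ) ≤ b) (t : ℕ) :
    (Nat.count p (m * t) : ℝ) ≤ b * t := by
  induction t with
  | zero => simp
  | succ t ih =>
    rw [Nat.mul_succ, Nat.count_add]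
    push_cast
    linarith [hb (m * t)]

end Count

section Density

open scoped Classical in
/-- The proportion of `{0, …, n - 1}` lying in `I`, with the junk value `0` at `n = 0`. -/
noncomputable def prefixDensity (I : Set ℕ) (n : ℕ) : ℝ :=
  (Nat.count (· ∈ I) n : ℝ) / n

theorem prefixDensity_nonneg (I : Set ℕ) (n : ℕ) : 0 ≤ prefixDensity I n := by
  unfold prefixDensity
  positivity

theorem prefixDensity_le_one (I : Set ℕ) (n : ℕ) : prefixDensity I n ≤ 1 := by
  classical
  exact div_le_one_of_le₀ (Nat.cast_le.2 (Nat.count_le _)) n.cast_nonneg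

theorem continuous_prefixDensity (n : ℕ) :
    Continuous fun a : ℕ → Bool ↦ prefixDensity {j | a j = true} n := by
  have hind (j : ℕ) : Continuous fun a : ℕ → Bool ↦ if a j = true then (1 : ℝ) else 0 :=
    (continuous_of_discreteTopology (f := fun b : Bool ↦ if b = true then (1 : ℝ) else 0)).comp
      (continuous_apply (A := fun _ ↦ Bool) j)
  convert (continuous_finsetSum (Finset.range n) fun j _ ↦ hind j).div_const (n : ℝ)
  rw [prefixDensity, Nat.count_eq_card_filter_range, Finset.natCast_card_filter]
  congr!

theorem count_le_of_forall_ncard_le {I : Set ℕ} {m : ℕ} {s : ℝ} [DecidablePred (· ∈ I)]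
    (hm : 1 ≤ m) (hs : ∀ k, ((I ∩ Set.Ico k (k + m)).ncard : ℝ) ≤ s * m) (n : ℕ) :
    (Nat.count (· ∈ I) n : ℝ) ≤ s * (n + m) := by
  have hs₀ : 0 ≤ s := by
    have := (Nat.cast_nonneg _).trans (hs 0)
    exact nonneg_of_mul_nonneg_left this (by exact_mod_cast hm)
  have hwindow (k : ℕ) : (Nat.count (fun i ↦ k + i ∈ I) m : ℝ) ≤ s * m :=
    ncard_inter_Ico_add I k m ▸ hs k
  calc (Nat.count (· ∈ I) n : ℝ)
      ≤ Nat.count (· ∈ I) (m * (n / m + 1)) := by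
        exact_mod_cast Nat.count_monotone _ (Nat.lt_mul_div_succ n hm).le
    _ ≤ s * m * (n / m + 1 : ℕ) := count_mul_le_of_forall_count_add_le hwindow _
    _ = s * ((m * (n / m) : ℕ) + m) := by push_cast; ring
    _ ≤ s * (n + m) := by gcongr; exact Nat.mul_div_le n m

theorem le_upperBanachDensity_of_frequently_le_prefixDensity {I : Set ℕ} {c : ℝ}
    (h : ∃ᶠ n in atTop, c ≤ prefixDensity I n) : c ≤ upperBanachDensity I := by
  classical
  have : Nonempty {m : ℕ // 1 ≤ m} := ⟨⟨1, le_rfl⟩⟩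
  refine le_ciInf fun ⟨m, hm⟩ ↦ ?_
  have hm₀ : (0 : ℝ) < m := by exact_mod_cast hm
  have hbdd : BddAbove (Set.range fun k ↦ ((I ∩ Set.Ico k (k + m)).ncard : ℝ) / m) := by
    refine ⟨1, Set.forall_mem_range.2 fun k ↦ div_le_one_of_le₀ ?_ hm₀.le⟩
    simpa using Set.ncard_le_ncard (Set.inter_subset_right (s := I)) (Set.finite_Ico k (k + m))
  set s := ⨆ k, ((I ∩ Set.Ico k (k + m)).ncard : ℝ) / m
  have hs (k : ℕ) : ((I ∩ Set.Ico k (k + m)).ncard : ℝ) ≤ s * m :=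
    (div_le_iff₀ hm₀).1 (le_ciSup hbdd k)
  by_contra! hsc
  have hlarge : ∀ᶠ n : ℕ in atTop, s * m < (c - s) * n :=
    (tendsto_natCast_atTop_atTop.const_mul_atTop (sub_pos.2 hsc)).eventually_gt_atTop _
  obtain ⟨n, hcn, hn₀, hn⟩ := (h.and_eventually ((eventually_gt_atTop 0).and hlarge)).exists
  have hle : c * n ≤ s * (n + m) :=
    ((le_div_iff₀ (by exact_mod_cast hn₀)).1 hcn).trans (count_le_of_forall_ncard_le hm hs n)
  linarith

theorem exists_le_upperBanachDensity_forall_finset_subset {F : ℕ → Set ℕ} {N : ℕ → ℕ} {c : ℝ}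
    (hN : Tendsto N atTop atTop)
    (hc : ∀ q, ∀ c' < c, ∀ᶠ K : ℕ in atTop,
      c' * K ≤ ∑ k ∈ Finset.range K, prefixDensity (F k) (N q)) :
    ∃ I : Set ℕ, c ≤ upperBanachDensity I ∧
      ∀ s : Finset ℕ, (s : Set ℕ) ⊆ I → ∃ k, (s : Set ℕ) ⊆ F k := by
  classical
  let x (k : ℕ) : ℕ → Bool := fun j ↦ decide (j ∈ F k)
  let f (q : ℕ) : C(ℕ → Bool, ℝ) := ⟨_, continuous_prefixDensity (N q)⟩
  have hx (k : ℕ) : {j | x k j = true} = F k := by simp [x]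
  obtain ⟨a, ha, hfreq⟩ := exists_mem_closure_range_forall_lt_frequently_lt (c := c) x (f := f)
    (fun q a ↦ prefixDensity_nonneg _ _) (fun q a ↦ prefixDensity_le_one _ _)
    (by simpa only [f, ContinuousMap.coe_mk, hx] using hc)
  refine ⟨{j | a j = true}, le_of_forall_lt_imp_le_of_dense fun c' hc' ↦ ?_, fun s hs ↦ ?_⟩
  · exact le_upperBanachDensity_of_frequently_le_prefixDensity
      (hN.frequently ((hfreq c' hc').mono fun q hq ↦ hq.le))
  · have hopen : IsOpen ((s : Set ℕ).pi fun _ ↦ ({true} : Set Bool)) :=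
      isOpen_set_pi s.finite_toSet fun _ _ ↦ isOpen_discrete _
    obtain ⟨_, hk, k, rfl⟩ := mem_closure_iff.1 ha _ hopen fun j hj ↦ hs hj
    exact ⟨k, fun j hj ↦ of_decide_eq_true (hk j hj)⟩

end Density

section Syndetic

variable {m n : ℕ}

theorem MSyndetic.pos {I : Set ℕ} (hI : MSyndetic m I) : 0 < m := by
  obtain ⟨i, -, h⟩ := hI 0
  omega

theorem MSyndetic.div_le_count {I : Set ℕ} [DecidablePred (· ∈ I)] (hI : MSyndetic m I) (N : ℕ) :
    N / m ≤ Nat.count (· ∈ I) N := by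
  have hmul (p : ℕ) : p ≤ Nat.count (· ∈ I) (m * p) := by
    induction p with
    | zero => simp
    | succ p ih =>
      obtain ⟨i, hiI, hi, him⟩ := hI (m * p)
      have hpos : 0 < Nat.count (fun k ↦ m * p + k ∈ I) m :=
        (Nat.zero_le _).trans_lt <| Nat.count_strict_mono (m := i - m * p)
          (by rwa [Nat.add_sub_of_le hi]) (by omega)
      rw [Nat.mul_succ, Nat.count_add]
      omega
  exact (hmul _).trans (Nat.count_monotone _ (Nat.mul_div_le N m))

open scoped Classical in
theorem sum_count_diagonal_le_sum_count (R : Set (ℕ × ℕ)) (K N : ℕ) :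
    ∑ i ∈ Finset.range K, Nat.count (fun j ↦ (i + j, j) ∈ R) N ≤
      ∑ k ∈ Finset.range (K + N), Nat.count (fun j ↦ (k, j) ∈ R) N := by
  rw [sum_range_count_comm fun i j ↦ (i + j, j) ∈ R, sum_range_count_comm fun k j ↦ (k, j) ∈ R]
  refine Finset.sum_le_sum fun j hj ↦ ?_
  calc Nat.count (fun i ↦ (i + j, j) ∈ R) K
      ≤ Nat.count (fun k ↦ (k, j) ∈ R) (K + j) := by rw [Nat.count_add']; omega
    _ ≤ Nat.count (fun k ↦ (k, j) ∈ R) (K + N) :=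
        Nat.count_monotone _ (by have := Finset.mem_range.1 hj; omega)

variable {R : Set (ℕ × ℕ)} (h₀ : MSyndetic m {i | (i, 0) ∈ R})
  (hdiag : ∀ i, (i, 0) ∈ R → MSyndetic n {k | (i + k, k) ∈ R})

include h₀ hdiag

open scoped Classical in
theorem div_mul_div_le_sum_count (K N : ℕ) :
    K / m * (N / n) ≤ ∑ k ∈ Finset.range (K + N), Nat.count (fun j ↦ (k, j) ∈ R) N :=
  calc K / m * (N / n)
      ≤ Nat.count (fun i ↦ (i, 0) ∈ R) K * (N / n) := by gcongr; exact h₀.div_le_count K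
    _ = ∑ i ∈ Finset.range K with (i, 0) ∈ R, N / n := by
        rw [Finset.sum_const, Nat.count_eq_card_filter_range, smul_eq_mul]
    _ ≤ ∑ i ∈ Finset.range K with (i, 0) ∈ R, Nat.count (fun j ↦ (i + j, j) ∈ R) N :=
        Finset.sum_le_sum fun i hi ↦ (hdiag i (Finset.mem_filter.1 hi).2).div_le_count N
    _ ≤ ∑ i ∈ Finset.range K, Nat.count (fun j ↦ (i + j, j) ∈ R) N :=
        Finset.sum_le_sum_of_subset (Finset.filter_subset _ _)
    _ ≤ ∑ k ∈ Finset.range (K + N), Nat.count (fun j ↦ (k, j) ∈ R) N :=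
        sum_count_diagonal_le_sum_count R K N

theorem sub_div_le_sum_prefixDensity {q : ℕ} (hq : 0 < q) (K : ℕ) :
    (K - n * q - m : ℝ) / (m * n) ≤
      ∑ k ∈ Finset.range K, prefixDensity {j | (k, j) ∈ R} (n * q) := by
  obtain hlt | hle := lt_or_ge K (n * q)
  · have hneg : (K - n * q - m : ℝ) ≤ 0 := by
      have : (K : ℝ) ≤ n * q := by exact_mod_cast hlt.le
      linarith [m.cast_nonneg (α := ℝ)]
    exact (div_nonpos_of_nonpos_of_nonneg hneg (by positivity)).trans
      (Finset.sum_nonneg fun k _ ↦ prefixDensity_nonneg _ _)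
  obtain ⟨L, rfl⟩ := Nat.exists_eq_add_of_le' hle
  obtain ⟨i, hi, -⟩ := h₀ 0
  have hm : 0 < m := h₀.pos
  have hn : 0 < n := (hdiag i hi).pos
  have hfloor : (L - m : ℝ) ≤ m * (L / m : ℕ) := by
    have : (L : ℝ) < m * ((L / m : ℕ) + 1) := by exact_mod_cast Nat.lt_mul_div_succ L hm
    linarith
  have hcount := div_mul_div_le_sum_count h₀ hdiag L (n * q)
  rw [Nat.mul_div_cancel_left q hn] at hcount
  calc (((L + n * q : ℕ) : ℝ) - n * q - m) / (m * n)
      = (L - m) / (m * n) := by push_cast; ring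
    _ ≤ m * (L / m : ℕ) / (m * n) := by gcongr
    _ = ((L / m * q : ℕ) : ℝ) / (n * q : ℕ) := by push_cast; field_simp
    _ ≤ _ := by
        simp only [prefixDensity, ← Finset.sum_div]
        gcongr
        exact_mod_cast hcount

theorem eventually_mul_le_sum_prefixDensity {q : ℕ} (hq : 0 < q) {c : ℝ}
    (hc : c < 1 / (m * n)) :
    ∀ᶠ K : ℕ in atTop,
      c * K ≤ ∑ k ∈ Finset.range K, prefixDensity {j | (k, j) ∈ R} (n * q) := by
  have hlarge : ∀ᶠ K : ℕ in atTop, (n * q + m : ℝ) / (m * n) ≤ (1 / (m * n) - c) * K :=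
    (tendsto_natCast_atTop_atTop.const_mul_atTop (sub_pos.2 hc)).eventually_ge_atTop _
  filter_upwards [hlarge] with K hK
  calc c * K ≤ 1 / (m * n) * K - (n * q + m) / (m * n) := by linarith
    _ = (K - n * q - m) / (m * n) := by ring
    _ ≤ _ := sub_div_le_sum_prefixDensity h₀ hdiag hq K

end Syndetic

theorem arvanitakis_fremlin_lemma_general {m n : ℕ} {R : Set (ℕ × ℕ)}
    (h₀ : MSyndetic m {i | (i, 0) ∈ R})
    (hdiag : ∀ i, (i, 0) ∈ R → MSyndetic n {k | (i + k, k) ∈ R}) :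
    ∃ I : Set ℕ, 1 / (m * n : ℝ) ≤ upperBanachDensity I ∧
      ∀ s : Finset ℕ, (s : Set ℕ) ⊆ I → ∃ k, ∀ i ∈ s, (k, i) ∈ R := by
  obtain ⟨i, hi, -⟩ := h₀ 0
  have hn : 0 < n := (hdiag i hi).pos
  have hscale : Tendsto (fun q ↦ n * (q + 1)) atTop atTop :=
    (tendsto_add_atTop_nat 1).const_mul_atTop' hn
  exact exists_le_upperBanachDensity_forall_finset_subset hscale fun q _ hc ↦
    eventually_mul_le_sum_prefixDensity h₀ hdiag q.succ_pos hc

/-- **Arvanitakis/Fremlin combinatorial lemma.** If `{i : (i,0) ∈ R}` is `m`-syndetic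
and `{k : (i+k, j+k) ∈ R}` is `m`-syndetic whenever `(i,j) ∈ R`, then there is a set
`I` of upper Banach density at least `1/(2m²)` such that any two elements of `I` have
a common `R`-predecessor. -/
theorem arvanitakis_fremlin_lemma
    (m : ℕ) (hm : 1 ≤ m) (R : Set (ℕ × ℕ))
    (h0 : MSyndetic m {i : ℕ | (i, 0) ∈ R})
    (hshift : ∀ i j : ℕ, (i, j) ∈ R → MSyndetic m {k : ℕ | (i + k, j + k) ∈ R}) :
    ∃ I : Set ℕ, 1 / (2 * (m : ℝ) ^ 2) ≤ upperBanachDensity I ∧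
      ∀ i ∈ I, ∀ j ∈ I, ∃ k : ℕ, (k, i) ∈ R ∧ (k, j) ∈ R := by
  obtain ⟨I, hI, hR⟩ := arvanitakis_fremlin_lemma_general h0 fun i hi ↦ by simpa using hshift i 0 hi
  have : (0 : ℝ) < m := by exact_mod_cast hm
  have hconst : 1 / (2 * (m : ℝ) ^ 2) ≤ 1 / (m * m) :=
    one_div_le_one_div_of_le (by positivity) (by nlinarith)
  exact ⟨I, hconst.trans hI, fun i hi j hj ↦ by simpa using hR {i, j} (by grind)⟩
end

section
/- Let m ≥ 1 be an integer and let R ⊆ ℕ × ℕ be a relation such that (i) the set {i ∈ ℕ : (i, 0) ∈ R} is m-syndetic, and (ii) whenever (i, j) ∈ R, the set {k ∈ ℕ : (i+k, j+k) ∈ R} is m-syndetic. Then for all natural numbers k ≤ l there exist i ∈ [l, l+2m) and j ∈ [k, k+m) with (i, j) ∈ R. -/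
section BottomRow

variable {m n : ℕ} {R : Set (ℕ × ℕ)}

theorem relation_meets_parallelogram
    (hrow : MSyndetic m {i : ℕ | (i, 0) ∈ R})
    (hdiag : ∀ i : ℕ, (i, 0) ∈ R → MSyndetic n {j : ℕ | (i + j, j) ∈ R}) (d k : ℕ) :
    ∃ i : ℕ, d ≤ i ∧ i < d + m ∧ ∃ j : ℕ, k ≤ j ∧ j < k + n ∧ (i + j, j) ∈ R := by
  obtain ⟨i, hi, hdi, him⟩ := hrow d
  obtain ⟨j, hj, hkj, hjn⟩ := hdiag i hi k
  exact ⟨i, hdi, him, j, hkj, hjn, hj⟩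

theorem relation_meets_rectangle_general
    (hrow : MSyndetic m {i : ℕ | (i, 0) ∈ R})
    (hdiag : ∀ i : ℕ, (i, 0) ∈ R → MSyndetic n {j : ℕ | (i + j, j) ∈ R})
    {k l : ℕ} (hkl : k ≤ l) :
    ∃ i : ℕ, l ≤ i ∧ i < l + (m + n) ∧ ∃ j : ℕ, k ≤ j ∧ j < k + n ∧ (i, j) ∈ R := by
  obtain ⟨d, rfl⟩ := Nat.exists_eq_add_of_le' hkl
  obtain ⟨i, hdi, him, j, hkj, hjn, hij⟩ := relation_meets_parallelogram hrow hdiag d k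
  exact ⟨i + j, by lia, by lia, j, hkj, hjn, hij⟩

end BottomRow

/-- If `{i : (i,0) ∈ R}` is `m`-syndetic and `{k : (i+k, j+k) ∈ R}` is `m`-syndetic
whenever `(i,j) ∈ R`, then `R` meets `[l, l+2m) × [k, k+m)` whenever `k ≤ l`. -/
theorem relation_meets_rectangle
    (m : ℕ) (hm : 1 ≤ m) (R : Set (ℕ × ℕ))
    (h0 : MSyndetic m {i : ℕ | (i, 0) ∈ R})
    (hshift : ∀ i j : ℕ, (i, j) ∈ R → MSyndetic m {k : ℕ | (i + k, j + k) ∈ R}) :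
    ∀ k l : ℕ, k ≤ l →
      ∃ i : ℕ, l ≤ i ∧ i < l + 2 * m ∧
        ∃ j : ℕ, k ≤ j ∧ j < k + m ∧ (i, j) ∈ R := by
  intro k l hkl
  rw [two_mul]
  exact relation_meets_rectangle_general h0
    (fun i hi ↦ by simpa only [zero_add] using hshift i 0 hi) hkl
end

section
/- Let (S, Φ) be a Menger space under Min whose probabilistic metric takes values in D⁺, let m ≥ 1 be an integer and k ∈ (0,1), let f : S → S be a probabilistic (m,k)-B-contraction, and let p ∈ S. Then there exists a set I ⊆ ℕ with upper Banach density d*(I) > 0 such that the family (f^i p)_{i ∈ I} is Cauchy: for every t > 0 and ε > 0 there exists N ∈ ℕ such that F_{f^i p, f^j p}(t) > 1 − ε for all i, j ∈ I with i, j ≥ N. -/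
open Filter

/-!
Call `n` *controlled* from `a` if `f^n p` lies within `k^a D / (1 - k)` of `f^a p` at every level at
which `p, f p, …, f^m p` lie within `D` of `p`. The contraction, followed along the orbits of `p`
and `f^b p` simultaneously, gives along a syndetic set of times `a` the full factor `k^a`. The
indices controlled from `0` are syndetic too, since `D + k D / (1 - k) = D / (1 - k)`, and whenever
`b` is one of them, `a + b` is controlled from `a` for a syndetic set of `a`. By pigeonhole, every
window of length `m` contains an `a` for which the set controlled from `a` has density about `1 /
m²`; an ultrafilter makes these densities refer to the same scales. Sets of uniformly positive
density cannot be pairwise disjoint infinitely often, so there is a sequence of such times along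
which consecutive sets meet. Consecutive centers `f^a p` are then geometrically close, and cutting
the sets off at suitable scales and taking the union gives `I`.
-/

theorem ncard_inter_Ico_eq_count (A : Set ℕ) [DecidablePred (· ∈ A)] (a n : ℕ) :
    (A ∩ Set.Ico a (a + n)).ncard = Nat.count (fun j => a + j ∈ A) n := by
  have himage : A ∩ Set.Ico a (a + n) =
      (((Finset.range n).filter (fun j => a + j ∈ A)).image (a + ·) : Finset ℕ) := by
    ext x
    simp only [Set.mem_inter_iff, Set.mem_Ico, Finset.coe_image, Finset.coe_filter,
      Finset.mem_range, Set.mem_image, Set.mem_ofPred_eq]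
    constructor
    · rintro ⟨hx, hax, hxn⟩
      exact ⟨x - a, ⟨by omega, by rwa [Nat.add_sub_cancel' hax]⟩, by omega⟩
    · rintro ⟨j, ⟨hj, hjA⟩, rfl⟩
      exact ⟨hjA, by omega, by omega⟩
  rw [himage, Set.ncard_coe_finset, Finset.card_image_of_injective _ (add_right_injective a),
    Nat.count_eq_card_filter_range]

theorem count_mul_le_of_forall_window_le {A : Set ℕ} [DecidablePred (· ∈ A)] {M : ℕ} {C : ℝ}
    (hC : ∀ a, (Nat.count (fun j => a + j ∈ A) M : ℝ) ≤ C) (w : ℕ) :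
    (Nat.count (· ∈ A) (M * w) : ℝ) ≤ C * w := by
  induction w with
  | zero => simp
  | succ w ih =>
    rw [Nat.mul_succ, Nat.count_add]
    push_cast
    linarith [hC (M * w)]

theorem le_upperBanachDensity_of_frequently {A : Set ℕ} [DecidablePred (· ∈ A)] {δ : ℝ}
    (hA : ∃ᶠ n : ℕ in atTop, δ * n ≤ Nat.count (· ∈ A) n) : δ ≤ upperBanachDensity A := by
  have : Nonempty {M : ℕ // 1 ≤ M} := ⟨⟨1, le_rfl⟩⟩
  refine le_ciInf ?_
  rintro ⟨M, hM⟩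
  have hM0 : (0 : ℝ) < M := by exact_mod_cast hM
  simp only [ncard_inter_Ico_eq_count]
  set s : ℝ := ⨆ a : ℕ, (Nat.count (fun j => a + j ∈ A) M : ℝ) / M
  have hbdd : BddAbove (Set.range fun a : ℕ => (Nat.count (fun j => a + j ∈ A) M : ℝ) / M) := by
    refine ⟨1, Set.forall_mem_range.2 fun a => ?_⟩
    rw [div_le_one hM0]
    exact_mod_cast Nat.count_le (p := fun j => a + j ∈ A) (n := M)
  have hs0 : 0 ≤ s := Real.iSup_nonneg fun a => by positivity
  have hwindow : ∀ a, (Nat.count (fun j => a + j ∈ A) M : ℝ) ≤ s * M := fun a =>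
    (div_le_iff₀ hM0).1 (le_ciSup hbdd a)
  have hcount : ∀ n : ℕ, (Nat.count (· ∈ A) n : ℝ) ≤ s * n + s * M := fun n => calc
    (Nat.count (· ∈ A) n : ℝ) ≤ Nat.count (· ∈ A) (M * (n / M + 1)) := by
      exact_mod_cast Nat.count_monotone _ (Nat.lt_mul_div_succ n hM).le
    _ ≤ s * M * (n / M + 1 : ℕ) := count_mul_le_of_forall_window_le hwindow _
    _ = s * (M * (n / M : ℕ)) + s * M := by push_cast; ring
    _ ≤ s * n + s * M := by
      gcongr
      exact_mod_cast Nat.mul_div_le n M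
  by_contra! hlt
  have hlarge : ∀ᶠ n : ℕ in atTop, s * M < (δ - s) * n :=
    (tendsto_natCast_atTop_atTop.const_mul_atTop (sub_pos.2 hlt)).eventually_gt_atTop _
  obtain ⟨n, hn, hn'⟩ := (hA.and_eventually hlarge).exists
  linarith [hcount n]

theorem exists_density_le_forall_eventually_mem {A : ℕ → Set ℕ}
    [∀ i, DecidablePred (· ∈ A i)] {δ : ℝ}
    (hA : ∀ r, ∃ᶠ n : ℕ in atTop, δ * n ≤ Nat.count (· ∈ A r) n) :
    ∃ I : Set ℕ, δ ≤ upperBanachDensity I ∧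
      ∀ R, ∃ N, ∀ i ∈ I, N ≤ i → ∃ r, R ≤ r ∧ i ∈ A r := by
  classical
  choose ν hν hcount using fun r => frequently_atTop.1 (hA r) r
  refine ⟨{i | ∃ r, i ∈ A r ∧ i < ν r}, le_upperBanachDensity_of_frequently ?_, fun R => ?_⟩
  · refine frequently_atTop.2 fun r => ⟨ν r, hν r, (hcount r).trans ?_⟩
    have hmem : ∀ i < ν r, i ∈ A r → ∃ r, i ∈ A r ∧ i < ν r := fun i hi hiA => ⟨r, hiA, hi⟩
    exact_mod_cast Nat.count_mono_left hmem
  · refine ⟨(Finset.range R).sup ν, ?_⟩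
    rintro i ⟨r, hir, hlt⟩ hNi
    refine ⟨r, ?_, hir⟩
    by_contra! hr
    exact (hlt.trans_le ((Finset.le_sup (Finset.mem_range.2 hr)).trans hNi)).false

theorem sum_count_le_of_pairwise_disjoint {A : ℕ → Set ℕ} [∀ i, DecidablePred (· ∈ A i)]
    (hA : Pairwise (Function.onFun Disjoint A)) (s : Finset ℕ) (n : ℕ) :
    ∑ i ∈ s, Nat.count (· ∈ A i) n ≤ n := by
  have hdisj : ∀ i ∈ s, ∀ j ∈ s, i ≠ j →
      Disjoint ((Finset.range n).filter (· ∈ A i)) ((Finset.range n).filter (· ∈ A j)) :=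
    fun i _ j _ hij =>
      Finset.disjoint_filter.2 fun x _ hi hj => Set.disjoint_left.1 (hA hij) hi hj
  calc ∑ i ∈ s, Nat.count (· ∈ A i) n
      = (s.biUnion fun i => (Finset.range n).filter (· ∈ A i)).card := by
        simp only [Nat.count_eq_card_filter_range, Finset.card_biUnion hdisj]
    _ ≤ (Finset.range n).card :=
        Finset.card_le_card (Finset.biUnion_subset.2 fun i _ => Finset.filter_subset _ _)
    _ = n := Finset.card_range n

theorem not_pairwise_disjoint_of_density_le {A : ℕ → Set ℕ} [∀ i, DecidablePred (· ∈ A i)]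
    {F : Filter ℕ} [F.NeBot] (hF : F ≤ atTop) {δ : ℝ} (hδ : 0 < δ)
    (hA : ∀ i, ∀ᶠ n : ℕ in F, δ * n ≤ Nat.count (· ∈ A i) n) :
    ¬ Pairwise (Function.onFun Disjoint A) := by
  intro hdisj
  obtain ⟨K, hK⟩ := exists_nat_gt (1 / δ)
  have hall : ∀ᶠ n : ℕ in F, ∀ i ∈ Finset.range K, δ * n ≤ Nat.count (· ∈ A i) n :=
    (eventually_all_finset _).2 fun i _ => hA i
  obtain ⟨n, hn, hn0⟩ := (hall.and (hF (eventually_gt_atTop 0))).exists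
  have hn0' : (0 : ℝ) < n := by exact_mod_cast hn0
  have hle : K * (δ * n) ≤ n := calc
    K * (δ * n) = ∑ _i ∈ Finset.range K, δ * n := by simp
    _ ≤ ∑ i ∈ Finset.range K, (Nat.count (· ∈ A i) n : ℝ) := Finset.sum_le_sum hn
    _ ≤ n := by exact_mod_cast sum_count_le_of_pairwise_disjoint hdisj _ n
  have hKδ : 1 < K * δ := (div_lt_iff₀ hδ).1 hK
  nlinarith

theorem exists_subseq_inter_nonempty_of_density_le {A : ℕ → Set ℕ} [∀ i, DecidablePred (· ∈ A i)]
    {F : Filter ℕ} [F.NeBot] (hF : F ≤ atTop) {δ : ℝ} (hδ : 0 < δ)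
    (hA : ∀ i, ∀ᶠ n : ℕ in F, δ * n ≤ Nat.count (· ∈ A i) n) :
    ∃ g : ℕ ↪o ℕ, ∀ r, (A (g r) ∩ A (g (r + 1))).Nonempty := by
  obtain ⟨g, hg | hg⟩ :=
    exists_increasing_or_nonincreasing_subseq' (fun B C : Set ℕ => (B ∩ C).Nonempty) A
  · exact ⟨g, hg⟩
  · refine absurd ?_ (not_pairwise_disjoint_of_density_le hF hδ fun i => hA (g i))
    exact (pairwise_disjoint_on _).2 fun i j hij =>
      Set.disjoint_iff_inter_eq_empty.2 (Set.not_nonempty_iff_eq_empty.1 (hg i j hij))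

/-- A set of natural numbers is syndetic with gap `m` if it meets every window of `m` consecutive
naturals; here these are the sets of times at which the contraction hypothesis can be applied. -/
def IsSyndetic (m : ℕ) (A : Set ℕ) : Prop :=
  ∀ N, ∃ a ∈ Finset.Ico N (N + m), a ∈ A

theorem isSyndetic_of_exists_add_mem {A : Set ℕ} {m : ℕ} (h0 : 0 ∈ A)
    (hstep : ∀ a ∈ A, ∃ s, 1 ≤ s ∧ s ≤ m ∧ a + s ∈ A) : IsSyndetic m A := by
  intro N
  simp only [Finset.mem_Ico]
  induction N with
  | zero =>
    obtain ⟨s, hs1, hsm, -⟩ := hstep 0 h0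
    exact ⟨0, ⟨le_rfl, by omega⟩, h0⟩
  | succ N ih =>
    obtain ⟨a, ⟨hNa, haN⟩, ha⟩ := ih
    by_cases h : N + 1 ≤ a
    · exact ⟨a, ⟨h, by omega⟩, ha⟩
    · obtain ⟨s, hs1, hsm, hs⟩ := hstep a ha
      exact ⟨a + s, ⟨by omega, by omega⟩, hs⟩

theorem IsSyndetic.le_count_mul {A : Set ℕ} [DecidablePred (· ∈ A)] {m : ℕ}
    (hA : IsSyndetic m A) (q : ℕ) : q ≤ Nat.count (· ∈ A) (m * q) := by
  induction q with
  | zero => exact Nat.zero_le _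
  | succ q ih =>
    obtain ⟨a, ha, haA⟩ := hA (m * q)
    rw [Finset.mem_Ico] at ha
    calc q + 1 ≤ Nat.count (· ∈ A) a + 1 := by
          gcongr
          exact ih.trans (Nat.count_monotone _ ha.1)
      _ ≤ Nat.count (· ∈ A) (m * (q + 1)) := Nat.count_strict_mono haA ha.2

theorem IsSyndetic.pos {A : Set ℕ} {m : ℕ} (hA : IsSyndetic m A) : 0 < m := by
  obtain ⟨a, ha, -⟩ := hA 0
  rw [Finset.mem_Ico] at ha
  omega

theorem IsSyndetic.le_mul_count_add {A : Set ℕ} [DecidablePred (· ∈ A)] {m : ℕ}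
    (hA : IsSyndetic m A) (n : ℕ) : n ≤ m * Nat.count (· ∈ A) n + m := calc
  n ≤ m * (n / m) + m := (Nat.lt_mul_div_succ n hA.pos).le
  _ ≤ m * Nat.count (· ∈ A) n + m := by
    gcongr
    exact (hA.le_count_mul _).trans (Nat.count_monotone _ (Nat.mul_div_le n m))

theorem count_le_sum_count_of_exists_add_mem {B : Set ℕ} {T : ℕ → Set ℕ}
    [DecidablePred (· ∈ B)] [∀ a, DecidablePred (· ∈ T a)] {s : Finset ℕ} {L : ℕ}
    (hs : ∀ a ∈ s, a ≤ L) (hT : ∀ b ∈ B, ∃ a ∈ s, a + b ∈ T a) (n : ℕ) :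
    Nat.count (· ∈ B) n ≤ ∑ a ∈ s, Nat.count (· ∈ T a) (L + n) := by
  have hcover : (Finset.range n).filter (· ∈ B) ⊆
      s.biUnion fun a => (Finset.range n).filter fun b => a + b ∈ T a := by
    intro b hb
    obtain ⟨hbn, hbB⟩ := Finset.mem_filter.1 hb
    obtain ⟨a, ha, hab⟩ := hT b hbB
    exact Finset.mem_biUnion.2 ⟨a, ha, Finset.mem_filter.2 ⟨hbn, hab⟩⟩
  have hshift : ∀ a ∈ s, Nat.count (fun b => a + b ∈ T a) n ≤ Nat.count (· ∈ T a) (L + n) :=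
    fun a ha => calc
      Nat.count (fun b => a + b ∈ T a) n ≤ Nat.count (· ∈ T a) (a + n) := by
        rw [Nat.count_add]
        exact Nat.le_add_left _ _
      _ ≤ Nat.count (· ∈ T a) (L + n) := Nat.count_monotone _ (Nat.add_le_add_right (hs a ha) n)
  refine le_trans ?_ (Finset.sum_le_sum hshift)
  simp only [Nat.count_eq_card_filter_range]
  exact (Finset.card_le_card hcover).trans Finset.card_biUnion_le

theorem IsSyndetic.eventually_exists_density_le {B : Set ℕ} {T : ℕ → Set ℕ}
    [∀ a, DecidablePred (· ∈ T a)] {m N : ℕ}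
    (hB : IsSyndetic m B) (hT : ∀ b ∈ B, ∃ a ∈ Finset.Ico N (N + m), a + b ∈ T a) :
    ∀ᶠ n : ℕ in atTop, ∃ a ∈ Finset.Ico N (N + m),
      1 / (2 * m ^ 2) * (n : ℝ) ≤ Nat.count (· ∈ T a) n := by
  classical
  filter_upwards [eventually_ge_atTop (2 * (N + 2 * m))] with n hn
  obtain ⟨n, rfl⟩ : ∃ n', n = N + m + n' := Nat.exists_eq_add_of_le (by omega)
  have hsum : n ≤ m * ∑ a ∈ Finset.Ico N (N + m), Nat.count (· ∈ T a) (N + m + n) + m :=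
    (hB.le_mul_count_add n).trans <| by
      gcongr
      exact count_le_sum_count_of_exists_add_mem (fun a ha => (Finset.mem_Ico.1 ha).2.le) hT n
  have hne : (Finset.Ico N (N + m)).Nonempty := Finset.nonempty_Ico.2 (by have := hB.pos; omega)
  obtain ⟨a, ha, hmax⟩ := Finset.exists_max_image _ (fun a => Nat.count (· ∈ T a) (N + m + n)) hne
  refine ⟨a, ha, ?_⟩
  have hpigeon : n ≤ m * (m * Nat.count (· ∈ T a) (N + m + n)) + m := hsum.trans <| by
    gcongr
    simpa using Finset.sum_le_card_nsmul _ _ _ hmax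
  have hfinal : N + m + n ≤ 2 * m ^ 2 * Nat.count (· ∈ T a) (N + m + n) := by
    nlinarith
  have hm : (0 : ℝ) < m := by exact_mod_cast hB.pos
  rw [one_div, inv_mul_le_iff₀ (by positivity)]
  exact_mod_cast hfinal

theorem IsSyndetic.exists_density_le_chain {B : Set ℕ} {T : ℕ → Set ℕ}
    [∀ a, DecidablePred (· ∈ T a)] {m : ℕ}
    (hB : IsSyndetic m B)
    (hT : ∀ N, ∀ b ∈ B, ∃ a ∈ Finset.Ico N (N + m), a + b ∈ T a) :
    ∃ c : ℕ → ℕ, (∀ r, r ≤ c r) ∧ (∀ r, (T (c r) ∩ T (c (r + 1))).Nonempty) ∧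
      ∀ r, ∃ᶠ n : ℕ in atTop, 1 / (2 * m ^ 2) * (n : ℝ) ≤ Nat.count (· ∈ T (c r)) n := by
  let U : Ultrafilter ℕ := hyperfilter ℕ
  have hU : (U : Filter ℕ) ≤ atTop := Nat.hyperfilter_le_atTop
  have hdense : ∀ N, ∃ a ∈ Finset.Ico N (N + m),
      ∀ᶠ n : ℕ in U, 1 / (2 * m ^ 2) * (n : ℝ) ≤ Nat.count (· ∈ T a) n := fun N =>
    (Ultrafilter.eventually_exists_mem_iff (Finset.finite_toSet _)).1
      (hU (hB.eventually_exists_density_le (hT N)))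
  choose a ha hdense using hdense
  have hm : (0 : ℝ) < m := by exact_mod_cast hB.pos
  obtain ⟨g, hg⟩ := exists_subseq_inter_nonempty_of_density_le hU (by positivity) hdense
  exact ⟨a ∘ g, fun r => g.strictMono.le_apply.trans (Finset.mem_Ico.1 (ha _)).1, hg,
    fun r => (hdense (g r)).frequently.filter_mono hU⟩

section PseudoMenger

variable {S : Type*} {Φ : S → S → ℝ → ℝ} {m : ℕ} {k : ℝ} {x : ℕ → S}

/-- A probabilistic pseudometric under `Min`: the axioms of a Menger space under `Min`, except that
distinct points may be at distance zero. Of the properties of a d.d.f. only monotonicity is kept. -/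
structure IsPseudoMenger (Φ : S → S → ℝ → ℝ) : Prop where
  mono : ∀ p q, Monotone (Φ p q)
  self : ∀ p t, 0 < t → Φ p p t = 1
  symm : ∀ p q, Φ p q = Φ q p
  triangle : ∀ p q r s t, 0 < s → 0 < t → min (Φ p q s) (Φ q r t) ≤ Φ p r (s + t)

/-- The `(m,k)`-B-contraction condition for a sequence of points, as satisfied by the orbits of a
probabilistic `(m,k)`-B-contraction. -/
def IsContractiveSeq (Φ : S → S → ℝ → ℝ) (m : ℕ) (k : ℝ) (x : ℕ → S) : Prop :=
  ∀ i j, ∃ s, 1 ≤ s ∧ s ≤ m ∧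
    ∀ t, 0 < t → Φ (x i) (x j) t ≤ Φ (x (i + s)) (x (j + s)) (k ^ s * t)

/-- `D` is a radius at level `l` of the initial segment `x 0, …, x m`, seen from `x 0`. -/
def IsInitialRadius (Φ : S → S → ℝ → ℝ) (m : ℕ) (x : ℕ → S) (l D : ℝ) : Prop :=
  0 < D ∧ ∀ i ≤ m, l ≤ Φ (x 0) (x i) D

/-- The times `a` at which shifting both `x 0` and `x b` by `a` contracts by the full factor
`k ^ a`. -/
def contractingShifts (Φ : S → S → ℝ → ℝ) (k : ℝ) (x : ℕ → S) (b : ℕ) : Set ℕ :=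
  {a | ∀ t, 0 < t → Φ (x 0) (x b) t ≤ Φ (x a) (x (a + b)) (k ^ a * t)}

/-- The indices controlled from `a`: those `n` for which `x n` is as close to `x a` as the geometric
series `k ^ a * (D + k * D + k ^ 2 * D + ⋯)` predicts, for all initial radii `D` at once. -/
def controlledFrom (Φ : S → S → ℝ → ℝ) (m : ℕ) (k : ℝ) (x : ℕ → S) (a : ℕ) : Set ℕ :=
  {n | ∀ l D, IsInitialRadius Φ m x l D → l ≤ Φ (x a) (x n) (k ^ a * (D / (1 - k)))}

theorem IsPseudoMenger.le_of_le_of_le (hΦ : IsPseudoMenger Φ) {u v w : S} {l s t r : ℝ}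
    (hs : 0 < s) (ht : 0 < t) (huv : l ≤ Φ u v s) (hvw : l ≤ Φ v w t) (hr : s + t ≤ r) :
    l ≤ Φ u w r :=
  (le_min huv hvw).trans ((hΦ.triangle u v w s t hs ht).trans (hΦ.mono u w hr))

theorem add_mul_div_one_sub (hk : k ≠ 1) (D : ℝ) : D + k * (D / (1 - k)) = D / (1 - k) := by
  have h1k : 1 - k ≠ 0 := sub_ne_zero.2 hk.symm
  linear_combination -(div_mul_cancel₀ D h1k)

theorem IsPseudoMenger.le_of_le_geometric (hΦ : IsPseudoMenger Φ) (hk : k ∈ Set.Ioo (0 : ℝ) 1)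
    {y : ℕ → S} {l D : ℝ} (hl : l ≤ 1) (hD : 0 < D)
    (hy : ∀ r, l ≤ Φ (y r) (y (r + 1)) (k ^ r * D)) (d r : ℕ) :
    l ≤ Φ (y r) (y (r + d)) (k ^ r * (D / (1 - k))) := by
  have hradius : ∀ r : ℕ, 0 < k ^ r * (D / (1 - k)) := fun r =>
    mul_pos (pow_pos hk.1 r) (div_pos hD (sub_pos.2 hk.2))
  induction d generalizing r with
  | zero => rwa [add_zero, hΦ.self _ _ (hradius r)]
  | succ d ih =>
    have htail := ih (r + 1)
    rw [Nat.add_right_comm] at htail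
    refine hΦ.le_of_le_of_le (mul_pos (pow_pos hk.1 r) hD) (hradius (r + 1)) (hy r) htail
      (le_of_eq ?_)
    linear_combination k ^ r * add_mul_div_one_sub hk.2.ne D

theorem isContractiveSeq_iterate {f : S → S}
    (hf : ∀ p q, ∃ i, 1 ≤ i ∧ i ≤ m ∧
      ∀ t, 0 < t → Φ p q t ≤ Φ (f^[i] p) (f^[i] q) (k ^ i * t)) (p : S) :
    IsContractiveSeq Φ m k fun n => f^[n] p := fun i j => by
  simpa only [← Function.iterate_add_apply, add_comm] using hf (f^[i] p) (f^[j] p)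

theorem IsInitialRadius.le_one (hΦ : IsPseudoMenger Φ) {l D : ℝ} (hlD : IsInitialRadius Φ m x l D) :
    l ≤ 1 :=
  (hlD.2 0 (Nat.zero_le m)).trans_eq (hΦ.self _ _ hlD.1)

theorem exists_isInitialRadius (hx : ∀ i ≤ m, Tendsto (Φ (x 0) (x i)) atTop (nhds 1)) {l : ℝ}
    (hl : l < 1) : ∃ D, IsInitialRadius Φ m x l D := by
  have hall : ∀ᶠ D in atTop, ∀ i ∈ Set.Iic m, l < Φ (x 0) (x i) D :=
    (eventually_all_finite (Set.finite_Iic m)).2 fun i hi => (hx i hi).eventually_const_lt hl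
  obtain ⟨D, hD, hD0⟩ := (hall.and (eventually_gt_atTop 0)).exists
  exact ⟨D, hD0, fun i hi => (hD i hi).le⟩

theorem IsContractiveSeq.isSyndetic_contractingShifts (hx : IsContractiveSeq Φ m k x) (hk : 0 < k)
    (b : ℕ) : IsSyndetic m (contractingShifts Φ k x b) := by
  refine isSyndetic_of_exists_add_mem (fun t _ => by simp) fun a ha => ?_
  obtain ⟨s, hs1, hsm, hs⟩ := hx a (a + b)
  refine ⟨s, hs1, hsm, fun t ht => (ha t ht).trans ?_⟩
  have hshift := hs (k ^ a * t) (by positivity)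
  rwa [Nat.add_right_comm, ← mul_assoc, ← pow_add, add_comm s a] at hshift

theorem IsContractiveSeq.isSyndetic_controlledFrom_zero (hx : IsContractiveSeq Φ m k x)
    (hΦ : IsPseudoMenger Φ) (hk : k ∈ Set.Ioo (0 : ℝ) 1) :
    IsSyndetic m (controlledFrom Φ m k x 0) := by
  simp only [controlledFrom, pow_zero, one_mul]
  have hradius : ∀ {l D}, IsInitialRadius Φ m x l D → 0 < D / (1 - k) := fun hlD =>
    div_pos hlD.1 (sub_pos.2 hk.2)
  refine isSyndetic_of_exists_add_mem (fun l D hlD => ?_) fun b hb => ?_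
  · rw [hΦ.self _ _ (hradius hlD)]
    exact hlD.le_one hΦ
  · obtain ⟨s, hs1, hsm, hs⟩ := hx 0 b
    refine ⟨s, hs1, hsm, fun l D hlD => ?_⟩
    have hE := hradius hlD
    have hshift := (hb l D hlD).trans (hs _ hE)
    rw [zero_add] at hshift
    refine hΦ.le_of_le_of_le hlD.1 (mul_pos (pow_pos hk.1 s) hE) (hlD.2 s hsm) hshift ?_
    calc D + k ^ s * (D / (1 - k))
        ≤ D + k * (D / (1 - k)) := by
          gcongr
          exact pow_le_of_le_one hk.1.le hk.2.le (by omega)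
      _ = D / (1 - k) := add_mul_div_one_sub hk.2.ne D

theorem IsContractiveSeq.exists_add_mem_controlledFrom (hx : IsContractiveSeq Φ m k x)
    (hk : k ∈ Set.Ioo (0 : ℝ) 1) (N : ℕ) {b : ℕ} (hb : b ∈ controlledFrom Φ m k x 0) :
    ∃ a ∈ Finset.Ico N (N + m), a + b ∈ controlledFrom Φ m k x a := by
  obtain ⟨a, haN, ha⟩ := hx.isSyndetic_contractingShifts hk.1 b N
  refine ⟨a, haN, fun l D hlD => ?_⟩
  have hb' := hb l D hlD
  rw [pow_zero, one_mul] at hb'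
  exact hb'.trans (ha _ (div_pos hlD.1 (sub_pos.2 hk.2)))

theorem IsPseudoMenger.le_of_mem_controlledFrom_chain (hΦ : IsPseudoMenger Φ)
    (hk : k ∈ Set.Ioo (0 : ℝ) 1) {c : ℕ → ℕ} (hc : ∀ r, r ≤ c r)
    (hmeet : ∀ r, (controlledFrom Φ m k x (c r) ∩ controlledFrom Φ m k x (c (r + 1))).Nonempty)
    {l D : ℝ} (hlD : IsInitialRadius Φ m x l D) {R r i : ℕ} (hRr : R ≤ r)
    (hi : i ∈ controlledFrom Φ m k x (c r)) :
    l ≤ Φ (x (c R)) (x i) (k ^ R * (3 * (D / (1 - k)) / (1 - k))) := by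
  have hk0 := hk.1
  have h1k : 0 < 1 - k := sub_pos.2 hk.2
  have hanti : Antitone (k ^ · : ℕ → ℝ) := pow_right_anti₀ hk.1.le hk.2.le
  have hE : 0 < D / (1 - k) := div_pos hlD.1 h1k
  have hnear : ∀ r, ∀ n ∈ controlledFrom Φ m k x (c r),
      l ≤ Φ (x (c r)) (x n) (k ^ r * (D / (1 - k))) :=
    fun r n hn => (hn l D hlD).trans
      (hΦ.mono _ _ (mul_le_mul_of_nonneg_right (hanti (hc r)) hE.le))
  generalize D / (1 - k) = E at hE hnear ⊢
  have hconsec : ∀ r, l ≤ Φ (x (c r)) (x (c (r + 1))) (k ^ r * (2 * E)) := fun r => by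
    obtain ⟨n, hn, hn'⟩ := hmeet r
    have hback := hnear (r + 1) n hn'
    rw [hΦ.symm] at hback
    refine hΦ.le_of_le_of_le (by positivity) (by positivity) (hnear r n hn) hback ?_
    calc k ^ r * E + k ^ (r + 1) * E
        ≤ k ^ r * E + k ^ r * E :=
          add_le_add_right (mul_le_mul_of_nonneg_right (hanti r.le_succ) hE.le) _
      _ = k ^ r * (2 * E) := by ring
  have hcenters : l ≤ Φ (x (c R)) (x (c r)) (k ^ R * (2 * E / (1 - k))) := by
    simpa [Nat.add_sub_cancel' hRr] using
      hΦ.le_of_le_geometric hk (hlD.le_one hΦ) (by positivity) hconsec (r - R) R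
  refine hΦ.le_of_le_of_le (by positivity) (by positivity) hcenters (hnear r i hi) ?_
  calc k ^ R * (2 * E / (1 - k)) + k ^ r * E
      ≤ k ^ R * (2 * E / (1 - k)) + k ^ R * (E / (1 - k)) := by
        have hpow : k ^ r ≤ k ^ R := hanti hRr
        have hE' : E ≤ E / (1 - k) := le_div_self hE.le h1k (by linarith)
        gcongr
    _ = k ^ R * (3 * E / (1 - k)) := by ring

theorem mk_b_contraction_cauchy_subfamily_general (hΦ : IsPseudoMenger Φ)
    (hk : k ∈ Set.Ioo (0 : ℝ) 1) (hx : IsContractiveSeq Φ m k x)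
    (hlim : ∀ i ≤ m, Tendsto (Φ (x 0) (x i)) atTop (nhds 1)) :
    ∃ I : Set ℕ, 1 / (2 * (m : ℝ) ^ 2) ≤ upperBanachDensity I ∧
      ∀ t : ℝ, 0 < t → ∀ ε : ℝ, 0 < ε → ∃ N : ℕ, ∀ i ∈ I, ∀ j ∈ I,
        N ≤ i → N ≤ j → 1 - ε < Φ (x i) (x j) t := by
  classical
  obtain ⟨c, hc, hmeet, hdense⟩ := (hx.isSyndetic_controlledFrom_zero hΦ hk).exists_density_le_chain
    fun N _ => hx.exists_add_mem_controlledFrom hk N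
  obtain ⟨I, hI, htail⟩ := exists_density_le_forall_eventually_mem hdense
  refine ⟨I, hI, fun t ht ε hε => ?_⟩
  obtain ⟨D, hD⟩ := exists_isInitialRadius hlim (show 1 - ε / 2 < 1 by linarith)
  set ρ : ℝ := 3 * (D / (1 - k)) / (1 - k)
  have hρ : 0 < ρ := by
    have := sub_pos.2 hk.2
    have := hD.1
    positivity
  obtain ⟨R, hR⟩ := exists_pow_lt_of_lt_one (show 0 < t / (2 * ρ) by positivity) hk.2
  obtain ⟨N, hN⟩ := htail R
  have hcenter : ∀ i ∈ I, N ≤ i → 1 - ε / 2 ≤ Φ (x (c R)) (x i) (k ^ R * ρ) := fun i hi hNi => by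
    obtain ⟨r, hRr, hir⟩ := hN i hi hNi
    exact hΦ.le_of_mem_controlledFrom_chain hk hc hmeet hD hRr hir
  have hRρ : 0 < k ^ R * ρ := mul_pos (pow_pos hk.1 R) hρ
  refine ⟨N, fun i hi j hj hNi hNj => ?_⟩
  have hle : 1 - ε / 2 ≤ Φ (x i) (x j) t := by
    refine hΦ.le_of_le_of_le hRρ hRρ ((hcenter i hi hNi).trans_eq (by rw [hΦ.symm]))
      (hcenter j hj hNj) ?_
    linarith [(lt_div_iff₀ (by positivity)).1 hR]
  linarith

end PseudoMenger

/-- In a Menger space under `Min` with values in `D⁺`, if `f` is a probabilistic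
`(m,k)`-B-contraction and `p ∈ S`, then there is a set `I ⊆ ℕ` of positive upper
Banach density such that `(f^[i] p)_{i ∈ I}` is a Cauchy family. -/
theorem mk_b_contraction_cauchy_subfamily
    {S : Type*} [Nonempty S] (Φ : S → S → ℝ → ℝ)
    (hDplus : ∀ p q : S, MemDplus (Φ p q))
    (hPM1 : ∀ p q : S, (∀ t : ℝ, 0 < t → Φ p q t = 1) ↔ p = q)
    (hPM2 : ∀ p q : S, Φ p q = Φ q p)
    (hPM3 : ∀ p q r : S, ∀ s t : ℝ, 0 < s → 0 < t →
      min (Φ p q s) (Φ q r t) ≤ Φ p r (s + t))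
    (m : ℕ) (hm : 1 ≤ m) (k : ℝ) (hk : k ∈ Set.Ioo (0 : ℝ) 1)
    (f : S → S)
    (hf : ∀ p q : S, ∃ i : ℕ, 1 ≤ i ∧ i ≤ m ∧
      ∀ t : ℝ, 0 < t → Φ p q t ≤ Φ (f^[i] p) (f^[i] q) (k ^ i * t))
    (p : S) :
    ∃ I : Set ℕ, 0 < upperBanachDensity I ∧
      ∀ t : ℝ, 0 < t → ∀ ε : ℝ, 0 < ε → ∃ N : ℕ, ∀ i ∈ I, ∀ j ∈ I,
        N ≤ i → N ≤ j → 1 - ε < Φ (f^[i] p) (f^[j] p) t := by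
  have hΦ : IsPseudoMenger Φ :=
    ⟨fun p q => (hDplus p q).1.1, fun p => (hPM1 p p).2 rfl, hPM2, hPM3⟩
  obtain ⟨I, hI, hCauchy⟩ := mk_b_contraction_cauchy_subfamily_general hΦ hk
    (isContractiveSeq_iterate hf p) fun i _ => (hDplus p (f^[i] p)).2
  exact ⟨I, lt_of_lt_of_le (by positivity) hI, hCauchy⟩
end

section
/- Let V be a real vector space with probabilistic norm ν, and let f : V → V be a C-contraction with constant k ∈ (0,1). Then for every ε ∈ (0,1) there exists n₀ = n₀(ε) ∈ ℕ such that for all n > n₀ and for every p ∈ V, ν_{f^n p}(ε) > 1 − ε. -/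
/-!
The `n`-th iterate of a C-contraction with constant `k` is a C-contraction with constant `k ^ n`.
Since `ν` is nonnegative, `1 - t < ν p t` holds for every `p` as soon as `t > 1`; starting from
one such `t`, the iterates bring the scale `k ^ n * t` below `ε` at a rate independent of `p`.
-/

open Filter Topology

/-- `f` is a C-contraction with constant `k` for the family `ν` of distance distribution functions:
if the value of `ν p` at a scale `t > 0` exceeds `1 - t`, then the same holds for `f p` at the
scale `k * t`. The restriction `0 < k < 1` is stated separately, so that the identity has
constant `1`. -/
def IsCContraction {X : Type*} (ν : X → ℝ → ℝ) (k : ℝ) (f : X → X) : Prop :=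
  ∀ p : X, ∀ t : ℝ, 0 < t → 1 - t < ν p t → 1 - k * t < ν (f p) (k * t)

namespace IsCContraction

variable {X : Type*} {ν : X → ℝ → ℝ} {k l : ℝ} {f g : X → X}

protected theorem id (ν : X → ℝ → ℝ) : IsCContraction ν 1 id := fun p t _ ht => by
  simpa only [one_mul, id_eq] using ht

theorem comp (hg : IsCContraction ν l g) (hf : IsCContraction ν k f) (hk : 0 < k) :
    IsCContraction ν (l * k) (g ∘ f) := fun p t ht hpt => by
  simpa only [mul_assoc, Function.comp_apply] using hg (f p) (k * t) (mul_pos hk ht) (hf p t ht hpt)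

theorem iterate (hf : IsCContraction ν k f) (hk : 0 < k) (n : ℕ) :
    IsCContraction ν (k ^ n) f^[n] := by
  induction n with
  | zero => simpa only [pow_zero, Function.iterate_zero] using IsCContraction.id ν
  | succ n ih => simpa only [pow_succ, Function.iterate_succ] using ih.comp hf hk

end IsCContraction

theorem one_sub_lt_of_le {φ : ℝ → ℝ} (hφ : Monotone φ) {s t : ℝ} (hst : s ≤ t)
    (hs : 1 - s < φ s) : 1 - t < φ t :=
  calc
    1 - t ≤ 1 - s := sub_le_sub_left hst 1
    _ < φ s := hs
    _ ≤ φ t := hφ hst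

theorem c_contraction_iterates_to_theta_general {X : Type*} {ν : X → ℝ → ℝ}
    (hν : ∀ p, Monotone (ν p)) {t : ℝ} (ht : 0 < t) (hνt : ∀ p, 1 - t < ν p t)
    {k : ℝ} (hk : k ∈ Set.Ioo (0 : ℝ) 1) {f : X → X} (hf : IsCContraction ν k f)
    {ε : ℝ} (hε : 0 < ε) : ∃ n₀ : ℕ, ∀ n : ℕ, n₀ < n → ∀ p, 1 - ε < ν (f^[n] p) ε := by
  have scale_tendsto : Tendsto (fun n : ℕ => k ^ n * t) atTop (𝓝 0) := by
    simpa only [zero_mul] using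
      (tendsto_pow_atTop_nhds_zero_of_lt_one hk.1.le hk.2).mul_const t
  obtain ⟨n₀, scale_le⟩ := (scale_tendsto.eventually_le_const hε).exists_forall_of_atTop
  exact ⟨n₀, fun n hn p =>
    one_sub_lt_of_le (hν _) (scale_le n hn.le) (hf.iterate hk.1 n p t ht (hνt p))⟩

/-- For a C-contraction `f` on a PN space, for every `ε ∈ (0,1)` there is `n₀` such
that `ν_{f^n p}(ε) > 1 - ε` for all `n > n₀` and all `p`. -/
theorem c_contraction_iterates_to_theta
    {V : Type*} [AddCommGroup V] [Module ℝ V] (ν : V → ℝ → ℝ)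
    (hν : ∀ p : V, Monotone (ν p) ∧ (∀ t : ℝ, 0 ≤ ν p t ∧ ν p t ≤ 1) ∧
      (∀ t : ℝ, t ≤ 0 → ν p t = 0))
    (k : ℝ) (hk : k ∈ Set.Ioo (0 : ℝ) 1) (f : V → V)
    (hf : ∀ p : V, ∀ t : ℝ, 0 < t → 1 - t < ν p t → 1 - k * t < ν (f p) (k * t)) :
    ∀ ε : ℝ, ε ∈ Set.Ioo (0 : ℝ) 1 → ∃ n₀ : ℕ, ∀ n : ℕ, n₀ < n → ∀ p : V,
      1 - ε < ν (f^[n] p) ε := by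
  have one_sub_two_lt (p : V) : 1 - 2 < ν p 2 := by linarith [((hν p).2.1 2).1]
  exact fun ε hε => c_contraction_iterates_to_theta_general (fun p => (hν p).1) two_pos
    one_sub_two_lt hk hf hε.1
end
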